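/- Let W ⊆ ℝ² be a simple polygon and let F be its free space. Then every connected component of F is simply connected. -/

import Mathlib

open Metric Set

noncomputable section

/-- The Euclidean plane ℝ². -/
abbrev Plane : Type := EuclideanSpace ℝ (Fin 2)

/-- A simple polygon, given by a simple (injective) closed polygonal curve in the plane. -/
structure SimplePolygon where
  /-- the parametrization of the boundary curve over `[0,1]` -/
  toFun : ℝ → Plane
  continuous : Continuous toFun
  closed : toFun 0 = toFun 1
  injOn : Set.InjOn toFun (Set.Ico (0 : ℝ) 1)
  /-- the curve is polygonal: it is affine on each piece of some finite partition of `[0,1]` -/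
  polygonal : ∃ (n : ℕ) (t : Fin (n + 1) → ℝ),
    t 0 = 0 ∧ t (Fin.last n) = 1 ∧ StrictMono t ∧
    ∀ i : Fin n, ∀ s ∈ Set.Icc (t i.castSucc) (t i.succ),
      toFun s = toFun (t i.castSucc) +
        ((s - t i.castSucc) / (t i.succ - t i.castSucc)) •
          (toFun (t i.succ) - toFun (t i.castSucc))

/-- The boundary curve of a simple polygon, as a subset of the plane. -/
def SimplePolygon.bdryCurve (P : SimplePolygon) : Set Plane :=
  P.toFun '' Set.Icc 0 1

/-- The closed region bounded by a simple polygon: the union of the boundary curve with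
the bounded connected components of its complement. -/
def SimplePolygon.region (P : SimplePolygon) : Set Plane :=
  P.bdryCurve ∪
    {x | x ∉ P.bdryCurve ∧ Bornology.IsBounded (connectedComponentIn P.bdryCurveᶜ x)}

/-- The free space of a simple polygon: all positions whose open unit disc lies in the region. -/
def SimplePolygon.freeSpace (P : SimplePolygon) : Set Plane :=
  {x | Metric.ball x 1 ⊆ P.region}

/-!
The complement of the free space `F` is the open `1`-neighborhood of the unbounded component of the
complement of the boundary curve. It is therefore connected, and it is a finite union of open convex
sets, namely the neighborhoods of the cells, lying in that component, of the arrangement of lines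
through the edges.

A compact planar set `F` with such a complement has contractible components. Finitely many vertical
lines cut the plane into strips in which the overlap pattern of the convex sets is constant, so that
`F` is there a finite stack of cells between graphs of continuous functions. Start with the part of
`F` on the vertical lines and add the cells strip by strip, from top to bottom: at each stage the
set is a finite disjoint union of absolute extensors. Indeed a cell meets the earlier part in its
two vertical walls, and these belong to different pieces: otherwise `F` would surround a point `p`
of the complement, whereas `z - p` has a continuous logarithm on `F` because `Fᶜ` is connected.
Gluing a cell to two distinct pieces along its walls gives an absolute extensor, and absolute
extensors are contractible.
-/

section Tietze

universe u v

variable {X : Type v} {Y : Type u} [TopologicalSpace Y] {Z Z₁ Z₂ : Set Y}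

theorem exists_continuousOn_union [TopologicalSpace X] {f g : Y → X} (hZ₁ : IsClosed Z₁)
    (hZ₂ : IsClosed Z₂) (hf : ContinuousOn f Z₁) (hg : ContinuousOn g Z₂)
    (hfg : EqOn f g (Z₁ ∩ Z₂)) :
    ∃ h : Y → X, ContinuousOn h (Z₁ ∪ Z₂) ∧ EqOn h f Z₁ ∧ EqOn h g Z₂ := by
  classical
  have h₁ : EqOn (Z₁.piecewise f g) f Z₁ := piecewise_eqOn _ _ _
  have h₂ : EqOn (Z₁.piecewise f g) g Z₂ := fun y hy => by
    by_cases hy₁ : y ∈ Z₁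
    · rw [h₁ hy₁, hfg ⟨hy₁, hy⟩]
    · rw [piecewise_eq_of_notMem _ _ _ hy₁]
  exact ⟨_, (hf.congr h₁).union_of_isClosed (hg.congr h₂) hZ₁ hZ₂, h₁, h₂⟩

theorem nonempty_of_tietzeExtension (X : Type v) [TopologicalSpace X]
    [TietzeExtension.{u, v} X] : Nonempty X := by
  obtain ⟨g, -⟩ := ContinuousMap.exists_restrict_eq (Y := X) (isClosed_empty (X := PUnit.{u + 1}))
    ⟨isEmptyElim, continuous_of_const fun x => isEmptyElim x⟩
  exact ⟨g PUnit.unit⟩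

theorem exists_continuous_extension_mapsTo [NormalSpace Y] [TopologicalSpace X] {A : Set X}
    [TietzeExtension.{u, v} A] {f : Y → X} (hZ : IsClosed Z) (hf : ContinuousOn f Z)
    (hfA : MapsTo f Z A) :
    ∃ g : Y → X, Continuous g ∧ (∀ y, g y ∈ A) ∧ EqOn g f Z := by
  obtain ⟨g, hg⟩ :=
    ContinuousMap.exists_restrict_eq (Y := A) hZ ⟨hfA.restrict, hf.mapsToRestrict hfA⟩
  exact ⟨fun y => g y, by fun_prop, fun y => (g y).2,
    fun y hy => congrArg Subtype.val (DFunLike.congr_fun hg ⟨y, hy⟩)⟩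

theorem tietzeExtension_of_exists_extension [TopologicalSpace X] [Nonempty X] {A : Set X}
    (h : ∀ (Y : Type u) [TopologicalSpace Y] [NormalSpace Y] (Z : Set Y) (f : Y → X), IsClosed Z →
      ContinuousOn f Z → MapsTo f Z A →
        ∃ g : Y → X, Continuous g ∧ (∀ y, g y ∈ A) ∧ EqOn g f Z) :
    TietzeExtension.{u, v} A where
  exists_restrict_eq' {Y _ _} Z hZ f := by
    let F : Y → X := Function.extend Subtype.val (fun z : Z => (f z : X))
      fun _ => Classical.arbitrary X
    have hFf (z : Z) : F z = f z := Subtype.val_injective.extend_apply _ _ z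
    have hF : ContinuousOn F Z := continuousOn_iff_continuous_domRestrict.2 <|
      (continuous_subtype_val.comp f.continuous).congr fun z => (hFf z).symm
    obtain ⟨g, hg, hgA, hgF⟩ := h Y Z F hZ hF fun y hy => hFf ⟨y, hy⟩ ▸ (f ⟨y, hy⟩).2
    refine ⟨⟨fun y => ⟨g y, hgA y⟩, by fun_prop⟩, ?_⟩
    ext z
    exact (hgF z.2).trans (hFf z)

theorem exists_continuous_extension_of_eqOn [NormalSpace Y] [TopologicalSpace X] {A : Set X}
    [TietzeExtension.{u, v} A] {f g : Y → X} (hZ₁ : IsClosed Z₁) (hZ₂ : IsClosed Z₂)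
    (hf : ContinuousOn f Z₁) (hg : ContinuousOn g Z₂) (hfA : MapsTo f Z₁ A)
    (hgA : MapsTo g Z₂ A) (hfg : EqOn f g (Z₁ ∩ Z₂)) :
    ∃ h : Y → X, Continuous h ∧ (∀ y, h y ∈ A) ∧ EqOn h f Z₁ ∧ EqOn h g Z₂ := by
  obtain ⟨k, hk, hkf, hkg⟩ := exists_continuousOn_union hZ₁ hZ₂ hf hg hfg
  have hkA : MapsTo k (Z₁ ∪ Z₂) A := by
    simpa only [union_self] using (hfA.congr hkf.symm).union_union (hgA.congr hkg.symm)
  obtain ⟨h, hh, hhA, hhk⟩ := exists_continuous_extension_mapsTo (hZ₁.union hZ₂) hk hkA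
  exact ⟨h, hh, hhA, fun y hy => (hhk (Or.inl hy)).trans (hkf hy),
    fun y hy => (hhk (Or.inr hy)).trans (hkg hy)⟩

theorem exists_isClosed_cover_mapsTo [NormalSpace Y] [PseudoMetricSpace X] {A B : Set X}
    {f : Y → X} (hA : IsClosed A) (hB : IsClosed B) (hA₀ : A.Nonempty) (hB₀ : B.Nonempty)
    (hZ : IsClosed Z) (hf : ContinuousOn f Z) (hfAB : MapsTo f Z (A ∪ B)) :
    ∃ YA YB : Set Y, IsClosed YA ∧ IsClosed YB ∧ YA ∪ YB = univ ∧ MapsTo f (Z ∩ YA) A ∧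
      MapsTo f (Z ∩ YB) B := by
  have hd : ContinuousOn (fun y => infDist (f y) A - infDist (f y) B) Z :=
    ((continuous_infDist_pt A).sub (continuous_infDist_pt B)).comp_continuousOn hf
  obtain ⟨h, hhd⟩ := ContinuousMap.exists_restrict_eq (Y := ℝ) hZ ⟨_, hd.domRestrict⟩
  have hhd (y : Y) (hy : y ∈ Z) : h y = infDist (f y) A - infDist (f y) B :=
    DFunLike.congr_fun hhd ⟨y, hy⟩
  refine ⟨{y | h y ≤ 0}, {y | 0 ≤ h y}, isClosed_le h.continuous continuous_const,
    isClosed_le continuous_const h.continuous, eq_univ_of_forall fun y => le_total (h y) 0, ?_, ?_⟩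
  · rintro y ⟨hy, hyA : h y ≤ 0⟩
    refine (hfAB hy).elim id fun hyB => (hA.mem_iff_infDist_zero hA₀).2 ?_
    rw [hhd y hy, infDist_zero_of_mem hyB, sub_zero] at hyA
    exact hyA.antisymm infDist_nonneg
  · rintro y ⟨hy, hyB : 0 ≤ h y⟩
    refine (hfAB hy).elim (fun hyA => (hB.mem_iff_infDist_zero hB₀).2 ?_) id
    rw [hhd y hy, infDist_zero_of_mem hyA, zero_sub, neg_nonneg] at hyB
    exact hyB.antisymm infDist_nonneg

theorem tietzeExtension_union [PseudoMetricSpace X] {A B : Set X} [TietzeExtension.{u, v} A]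
    [TietzeExtension.{u, v} B] [TietzeExtension.{u, v} ↥(A ∩ B)] (hA : IsClosed A)
    (hB : IsClosed B) : TietzeExtension.{u, v} ↥(A ∪ B) := by
  have hA₀ : A.Nonempty := nonempty_coe_sort.1 (nonempty_of_tietzeExtension.{u} A)
  have hB₀ : B.Nonempty := nonempty_coe_sort.1 (nonempty_of_tietzeExtension.{u} B)
  have : Nonempty X := hA₀.nonempty
  refine tietzeExtension_of_exists_extension fun Y _ _ Z f hZ hf hfAB => ?_
  obtain ⟨YA, YB, hYA, hYB, hcover, hfA, hfB⟩ :=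
    exists_isClosed_cover_mapsTo hA hB hA₀ hB₀ hZ hf hfAB
  obtain ⟨g₀, hg₀, hg₀AB, hg₀f⟩ := exists_continuous_extension_mapsTo (A := A ∩ B)
    (hZ.inter (hYA.inter hYB)) (hf.mono inter_subset_left)
    fun y hy => ⟨hfA ⟨hy.1, hy.2.1⟩, hfB ⟨hy.1, hy.2.2⟩⟩
  obtain ⟨gA, hgA, hgAA, hgAf, hgA₀⟩ := exists_continuous_extension_of_eqOn (hZ.inter hYA)
    (hYA.inter hYB) (hf.mono inter_subset_left) hg₀.continuousOn hfA (fun y _ => (hg₀AB y).1)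
    fun y hy => (hg₀f ⟨hy.1.1, hy.2⟩).symm
  obtain ⟨gB, hgB, hgBB, hgBf, hgB₀⟩ := exists_continuous_extension_of_eqOn (hZ.inter hYB)
    (hYA.inter hYB) (hf.mono inter_subset_left) hg₀.continuousOn hfB (fun y _ => (hg₀AB y).2)
    fun y hy => (hg₀f ⟨hy.1.1, hy.2⟩).symm
  obtain ⟨g, hg, hgYA, hgYB⟩ := exists_continuousOn_union hYA hYB hgA.continuousOn
    hgB.continuousOn (hgA₀.trans hgB₀.symm)
  rw [hcover, continuousOn_univ] at hg
  have hmem (y : Y) : y ∈ YA ∪ YB := hcover ▸ mem_univ y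
  refine ⟨g, hg, fun y => ?_, fun y hy => ?_⟩
  · exact (hmem y).imp (fun h => hgYA h ▸ hgAA y) fun h => hgYB h ▸ hgBB y
  · exact (hmem y).elim (fun h => (hgYA h).trans (hgAf ⟨hy, h⟩))
      fun h => (hgYB h).trans (hgBf ⟨hy, h⟩)

theorem tietzeExtension_union_union [PseudoMetricSpace X] {A B Q : Set X}
    [TietzeExtension.{u, v} A] [TietzeExtension.{u, v} B] [TietzeExtension.{u, v} Q]
    [TietzeExtension.{u, v} ↥(Q ∩ A)] [TietzeExtension.{u, v} ↥(Q ∩ B)] (hA : IsClosed A)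
    (hB : IsClosed B) (hQ : IsClosed Q) (hAB : Disjoint A B) :
    TietzeExtension.{u, v} ↥(Q ∪ A ∪ B) := by
  have := tietzeExtension_union.{u} hQ hA
  have hQAB : (Q ∪ A) ∩ B = Q ∩ B := by
    rw [union_inter_distrib_right, hAB.inter_eq, union_empty]
  have : TietzeExtension.{u, v} ↥((Q ∪ A) ∩ B) := hQAB ▸ ‹_›
  exact tietzeExtension_union (hQ.union hA) hB

theorem contractibleSpace_of_tietzeExtension (X : Type v) [TopologicalSpace X]
    [NormalSpace (X × unitInterval)] [TietzeExtension.{v, v} X] : ContractibleSpace X := by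
  obtain ⟨a⟩ := nonempty_of_tietzeExtension.{v} X
  have : TietzeExtension.{v, v} (univ : Set X) := .of_homeo (Homeomorph.Set.univ X)
  have hclosed (t : unitInterval) : IsClosed {p : X × unitInterval | p.2 = t} :=
    isClosed_eq continuous_snd continuous_const
  obtain ⟨h, hh, -, h₀, h₁⟩ := exists_continuous_extension_of_eqOn (A := univ) (hclosed 0)
    (hclosed 1) continuous_fst.continuousOn (continuous_const (y := a)).continuousOn
    (mapsTo_univ _ _) (mapsTo_univ _ _) fun p hp => (zero_ne_one (hp.1.symm.trans hp.2)).elim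
  rw [contractible_iff_id_nullhomotopic]
  exact ⟨a, ⟨⟨⟨fun p => h (p.2, p.1), by fun_prop⟩, fun x => h₀ (x := (x, 0)) rfl,
    fun x => h₁ (x := (x, 1)) rfl⟩⟩⟩

end Tietze

section Pieces

universe u

variable {X : Type u} [MetricSpace X]

/-- A finite family of pairwise disjoint closed sets, each an absolute extensor for normal spaces:
the closed set it covers is decomposed into finitely many contractible clopen pieces. -/
structure IsTietzePartition (𝒦 : Set (Set X)) : Prop where
  finite : 𝒦.Finite
  pairwiseDisjoint : 𝒦.PairwiseDisjoint id
  isClosed : ∀ K ∈ 𝒦, IsClosed K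
  tietzeExtension : ∀ K ∈ 𝒦, TietzeExtension.{u, u} K

/-- `S` is the union of some `IsTietzePartition`. -/
def HasTietzePartition (S : Set X) : Prop :=
  ∃ 𝒦 : Set (Set X), IsTietzePartition 𝒦 ∧ ⋃₀ 𝒦 = S

theorem isPreconnected_of_tietzeExtension (K : Set X) [TietzeExtension.{u, u} K] :
    IsPreconnected K := by
  have := contractibleSpace_of_tietzeExtension K
  exact isPreconnected_iff_preconnectedSpace.2 inferInstance

namespace IsTietzePartition

variable {𝒦 𝒮 : Set (Set X)} {E K L : Set X}

theorem isPreconnected (h𝒦 : IsTietzePartition 𝒦) (hK : K ∈ 𝒦) : IsPreconnected K :=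
  have := h𝒦.tietzeExtension K hK
  isPreconnected_of_tietzeExtension K

theorem subset_of_isPreconnected (h𝒦 : IsTietzePartition 𝒦) (hE : IsPreconnected E)
    (hE𝒦 : E ⊆ ⋃₀ 𝒦) (hK : K ∈ 𝒦) (hEK : (E ∩ K).Nonempty) : E ⊆ K := by
  have hclosed : IsClosed (⋃₀ (𝒦 \ {K})) :=
    sUnion_eq_biUnion ▸
      (h𝒦.finite.subset sdiff_subset).isClosed_biUnion fun L hL => h𝒦.isClosed L hL.1
  have hdisj : Disjoint K (⋃₀ (𝒦 \ {K})) :=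
    disjoint_sUnion_right.2 fun L hL => h𝒦.pairwiseDisjoint hK hL.1 (Ne.symm hL.2)
  have hcover : E ⊆ K ∪ ⋃₀ (𝒦 \ {K}) := by
    rwa [← sUnion_insert, insert_sdiff_self_of_mem hK]
  refine (isPreconnected_iff_subset_of_disjoint_closed.1 hE K _ (h𝒦.isClosed K hK) hclosed hcover
    (by rw [hdisj.inter_eq, inter_empty])).resolve_right fun h => ?_
  obtain ⟨x, hxE, hxK⟩ := hEK
  exact disjoint_left.1 hdisj hxK (h hxE)

theorem exists_subset_of_tietzeExtension (h𝒦 : IsTietzePartition 𝒦) [TietzeExtension.{u, u} E]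
    (hE : E ⊆ ⋃₀ 𝒦) : ∃ K ∈ 𝒦, E ⊆ K := by
  obtain ⟨x, hx⟩ := nonempty_of_tietzeExtension.{u} E
  obtain ⟨K, hK, hxK⟩ := hE hx
  exact ⟨K, hK,
    h𝒦.subset_of_isPreconnected (isPreconnected_of_tietzeExtension E) hE hK ⟨x, hx, hxK⟩⟩

theorem connectedComponentIn_eq (h𝒦 : IsTietzePartition 𝒦) (hK : K ∈ 𝒦) {x : X} (hx : x ∈ K) :
    connectedComponentIn (⋃₀ 𝒦) x = K :=
  Subset.antisymm
    (h𝒦.subset_of_isPreconnected isPreconnected_connectedComponentIn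
      (connectedComponentIn_subset _ _) hK ⟨x, mem_connectedComponentIn ⟨K, hK, hx⟩, hx⟩)
    ((h𝒦.isPreconnected hK).subset_connectedComponentIn hx (subset_sUnion_of_mem hK))

theorem exchange (h𝒦 : IsTietzePartition 𝒦) (hL : IsClosed L) [TietzeExtension.{u, u} L]
    (hdisj : ∀ K ∈ 𝒦 \ 𝒮, Disjoint L K) : IsTietzePartition (insert L (𝒦 \ 𝒮)) where
  finite := (h𝒦.finite.subset sdiff_subset).insert L
  pairwiseDisjoint :=
    (h𝒦.pairwiseDisjoint.subset sdiff_subset).insert fun K hK _ => hdisj K hK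
  isClosed := forall_mem_insert.2 ⟨hL, fun K hK => h𝒦.isClosed K hK.1⟩
  tietzeExtension := forall_mem_insert.2 ⟨inferInstance, fun K hK => h𝒦.tietzeExtension K hK.1⟩

end IsTietzePartition

namespace HasTietzePartition

variable {S Q E₁ E₂ : Set X}

theorem empty : HasTietzePartition (∅ : Set X) :=
  ⟨∅, ⟨finite_empty, pairwiseDisjoint_empty, fun _ => False.elim, fun _ => False.elim⟩,
    sUnion_empty⟩

theorem contractibleSpace_connectedComponentIn (hS : HasTietzePartition S) {x : X} (hx : x ∈ S) :
    ContractibleSpace (connectedComponentIn S x) := by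
  obtain ⟨𝒦, h𝒦, rfl⟩ := hS
  obtain ⟨K, hK, hxK⟩ := hx
  rw [h𝒦.connectedComponentIn_eq hK hxK]
  have := h𝒦.tietzeExtension K hK
  exact contractibleSpace_of_tietzeExtension K

theorem union_of_disjoint (hS : HasTietzePartition S) (hQ : IsClosed Q)
    [TietzeExtension.{u, u} Q] (hQS : Disjoint Q S) : HasTietzePartition (S ∪ Q) := by
  obtain ⟨𝒦, h𝒦, rfl⟩ := hS
  refine ⟨_, h𝒦.exchange (𝒮 := ∅) hQ fun K hK => hQS.mono_right (subset_sUnion_of_mem hK.1), ?_⟩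
  rw [sdiff_empty, sUnion_insert, union_comm]

theorem union_of_separated (hS : HasTietzePartition S) (hQ : IsClosed Q) [TietzeExtension.{u, u} Q]
    [TietzeExtension.{u, u} E₁] [TietzeExtension.{u, u} E₂] (hQS : Q ∩ S = E₁ ∪ E₂)
    (hsep : ∀ K ⊆ S, IsPreconnected K → E₁ ⊆ K → ¬E₂ ⊆ K) : HasTietzePartition (S ∪ Q) := by
  obtain ⟨𝒦, h𝒦, rfl⟩ := hS
  have hE₁ : E₁ ⊆ Q ∩ ⋃₀ 𝒦 := hQS ▸ subset_union_left
  have hE₂ : E₂ ⊆ Q ∩ ⋃₀ 𝒦 := hQS ▸ subset_union_right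
  obtain ⟨K₁, hK₁, hEK₁⟩ := h𝒦.exists_subset_of_tietzeExtension (hE₁.trans inter_subset_right)
  obtain ⟨K₂, hK₂, hEK₂⟩ := h𝒦.exists_subset_of_tietzeExtension (hE₂.trans inter_subset_right)
  have hne : K₁ ≠ K₂ := fun h =>
    hsep K₁ (subset_sUnion_of_mem hK₁) (h𝒦.isPreconnected hK₁) hEK₁ (h ▸ hEK₂)
  have hK₁₂ : Disjoint K₁ K₂ := h𝒦.pairwiseDisjoint hK₁ hK₂ hne
  have hQ_inter {K : Set X} (hK : K ∈ 𝒦) : Q ∩ K = E₁ ∩ K ∪ E₂ ∩ K := by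
    rw [← union_inter_distrib_right, ← hQS, inter_assoc,
      inter_eq_right.2 (subset_sUnion_of_mem hK)]
  have hQK₁ : Q ∩ K₁ = E₁ := by
    rw [hQ_inter hK₁, inter_eq_left.2 hEK₁, (hK₁₂.symm.mono_left hEK₂).inter_eq, union_empty]
  have hQK₂ : Q ∩ K₂ = E₂ := by
    rw [hQ_inter hK₂, inter_eq_left.2 hEK₂, (hK₁₂.mono_left hEK₁).inter_eq, empty_union]
  have := h𝒦.tietzeExtension K₁ hK₁
  have := h𝒦.tietzeExtension K₂ hK₂
  have : TietzeExtension.{u, u} ↥(Q ∩ K₁) := hQK₁ ▸ ‹_›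
  have : TietzeExtension.{u, u} ↥(Q ∩ K₂) := hQK₂ ▸ ‹_›
  have hc₁ := h𝒦.isClosed K₁ hK₁
  have hc₂ := h𝒦.isClosed K₂ hK₂
  have := tietzeExtension_union_union.{u} hc₁ hc₂ hQ hK₁₂
  refine ⟨_, h𝒦.exchange (𝒮 := {K₁, K₂}) ((hQ.union hc₁).union hc₂) ?_, ?_⟩
  · rintro K ⟨hK, hK'⟩
    obtain ⟨h₁, h₂⟩ : K ≠ K₁ ∧ K ≠ K₂ := by
      simpa only [mem_insert_iff, mem_singleton_iff, not_or] using hK'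
    have hd₁ : Disjoint K₁ K := h𝒦.pairwiseDisjoint hK₁ hK h₁.symm
    have hd₂ : Disjoint K₂ K := h𝒦.pairwiseDisjoint hK₂ hK h₂.symm
    refine disjoint_union_left.2 ⟨disjoint_union_left.2 ⟨?_, hd₁⟩, hd₂⟩
    rw [disjoint_iff_inter_eq_empty, hQ_inter hK, (hd₁.mono_left hEK₁).inter_eq,
      (hd₂.mono_left hEK₂).inter_eq, union_empty]
  · have h𝒦S : 𝒦 = 𝒦 \ {K₁, K₂} ∪ {K₁, K₂} :=
      (sdiff_union_of_subset (pair_subset hK₁ hK₂)).symm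
    conv_rhs => rw [h𝒦S]
    rw [sUnion_insert, sUnion_union, sUnion_pair]
    ac_rfl

end HasTietzePartition

end Pieces

section GraphCell

universe u v

/-- The part of the strip `a ≤ re z ≤ b` that lies between the graphs of `f` and `g`. -/
def graphCell (a b : ℝ) (f g : ℝ → ℝ) : Set ℂ :=
  {z | z.re ∈ Icc a b ∧ f z.re ≤ z.im ∧ z.im ≤ g z.re}

theorem isClosed_of_retraction {X : Type*} [TopologicalSpace X] [T2Space X] {A : Set X} {r : X → X}
    (hr : Continuous r) (hrA : ∀ x, r x ∈ A) (hrid : ∀ x ∈ A, r x = x) : IsClosed A := by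
  have hA : A = Function.fixedPoints r := Subset.antisymm hrid fun x hx => hx ▸ hrA x
  exact hA ▸ isClosed_fixedPoints hr

theorem tietzeExtension_of_retraction {X : Type v} [TopologicalSpace X] [TietzeExtension.{u, v} X]
    {A : Set X} {r : X → X} (hr : Continuous r) (hrA : ∀ x, r x ∈ A) (hrid : ∀ x ∈ A, r x = x) :
    TietzeExtension.{u, v} A :=
  .of_retract ⟨Subtype.val, continuous_subtype_val⟩ ⟨fun x => ⟨r x, hrA x⟩, hr.subtype_mk _⟩
    (ContinuousMap.ext fun x => Subtype.ext (hrid x x.2))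

variable {a b : ℝ} {f g : ℝ → ℝ}

theorem exists_retraction_graphCell (hab : a ≤ b) (hf : ContinuousOn f (Icc a b))
    (hg : ContinuousOn g (Icc a b)) (hfg : ∀ x ∈ Icc a b, f x ≤ g x) :
    ∃ r : ℂ → ℂ, Continuous r ∧ (∀ z, r z ∈ graphCell a b f g) ∧
      ∀ z ∈ graphCell a b f g, r z = z := by
  let π : ℝ → ℝ := fun x => projIcc a b hab x
  have hπ : Continuous π := continuous_subtype_val.comp continuous_projIcc
  have hπmem (x : ℝ) : π x ∈ Icc a b := (projIcc a b hab x).2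
  have hfπ : Continuous fun x => f (π x) := hf.comp_continuous hπ hπmem
  have hgπ : Continuous fun x => g (π x) := hg.comp_continuous hπ hπmem
  refine ⟨fun z => ⟨π z.re, max (f (π z.re)) (min (g (π z.re)) z.im)⟩, ?_, fun z => ?_, ?_⟩
  · refine Complex.equivRealProdCLM.symm.continuous.comp (f := fun z : ℂ =>
      (π z.re, max (f (π z.re)) (min (g (π z.re)) z.im))) ?_
    exact (hπ.comp Complex.continuous_re).prodMk <| (hfπ.comp Complex.continuous_re).max <|
      (hgπ.comp Complex.continuous_re).min Complex.continuous_im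
  · exact ⟨hπmem _, le_max_left _ _, max_le (hfg _ (hπmem _)) (min_le_left _ _)⟩
  · rintro z ⟨hz, hfz, hgz⟩
    have hπz : π z.re = z.re := congrArg Subtype.val (projIcc_of_mem hab hz)
    exact Complex.ext hπz (by simp only [hπz, min_eq_right hgz, max_eq_right hfz])

theorem isClosed_graphCell (hab : a ≤ b) (hf : ContinuousOn f (Icc a b))
    (hg : ContinuousOn g (Icc a b)) (hfg : ∀ x ∈ Icc a b, f x ≤ g x) :
    IsClosed (graphCell a b f g) :=
  let ⟨_, hr, hrmem, hrid⟩ := exists_retraction_graphCell hab hf hg hfg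
  isClosed_of_retraction hr hrmem hrid

theorem tietzeExtension_graphCell (hab : a ≤ b) (hf : ContinuousOn f (Icc a b))
    (hg : ContinuousOn g (Icc a b)) (hfg : ∀ x ∈ Icc a b, f x ≤ g x) :
    TietzeExtension.{0} (graphCell a b f g) :=
  let ⟨_, hr, hrmem, hrid⟩ := exists_retraction_graphCell hab hf hg hfg
  tietzeExtension_of_retraction hr hrmem hrid

theorem tietzeExtension_graphCell_self {c : ℝ} (hfg : f c ≤ g c) :
    TietzeExtension.{0} (graphCell c c f g) := by
  refine tietzeExtension_graphCell le_rfl ?_ ?_ ?_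
  · simp only [Icc_self, continuousOn_singleton]
  · simp only [Icc_self, continuousOn_singleton]
  · simpa only [Icc_self, mem_singleton_iff, forall_eq]

theorem graphCell_inter_re_eq {c : ℝ} (hc : c ∈ Icc a b) :
    graphCell a b f g ∩ {z | z.re = c} = graphCell c c f g := by
  ext z
  simp only [graphCell, mem_inter_iff, mem_ofPred_eq, Icc_self, mem_singleton_iff]
  constructor
  · rintro ⟨⟨-, hz⟩, rfl⟩
    exact ⟨rfl, hz⟩
  · rintro ⟨rfl, hz⟩
    exact ⟨⟨hc, hz⟩, rfl⟩

theorem graphCell_subset_of_dense {F : Set ℂ} {D : Set ℝ} (hF : IsClosed F)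
    (hf : ContinuousOn f (Icc a b)) (hg : ContinuousOn g (Icc a b))
    (hfg : ∀ x ∈ Icc a b, f x ≤ g x) (hD : D ⊆ Icc a b) (hDcl : Icc a b ⊆ closure D)
    (hDF : ∀ z ∈ graphCell a b f g, z.re ∈ D → z ∈ F) : graphCell a b f g ⊆ F := by
  rintro z ⟨hz, hfz, hgz⟩
  let φ : ℝ → ℂ := fun x => ⟨x, max (f x) (min (g x) z.im)⟩
  have hφ : ContinuousOn φ (Icc a b) :=
    Complex.equivRealProdCLM.symm.continuous.comp_continuousOn <|
      continuousOn_id.prodMk (hf.sup (hg.inf continuousOn_const))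
  have hφD : MapsTo φ D F := fun x hx => hDF _
    ⟨hD hx, le_max_left _ _, max_le (hfg x (hD hx)) (min_le_left _ _)⟩ hx
  have hφz : φ z.re = z := by simp only [φ, min_eq_right hgz, max_eq_right hfz]
  rw [← hφz, ← hF.closure_eq]
  exact ((hφ z.re hz).mono hD).mem_closure (hDcl hz) hφD

end GraphCell

section Logarithm

/-- The function `f` has a continuous logarithm on the set `S`. -/
def HasContinuousLogOn {X : Type*} [TopologicalSpace X] (f : X → ℂ) (S : Set X) : Prop :=
  ∃ h : X → ℂ, ContinuousOn h S ∧ ∀ x ∈ S, Complex.exp (h x) = f x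

namespace HasContinuousLogOn

variable {X : Type*} [TopologicalSpace X] {f g : X → ℂ} {S : Set X}

theorem of_mem_slitPlane (hf : ContinuousOn f S) (hfS : ∀ x ∈ S, f x ∈ Complex.slitPlane) :
    HasContinuousLogOn f S :=
  ⟨fun x => Complex.log (f x), hf.clog hfS, fun x hx =>
    Complex.exp_log (Complex.slitPlane_ne_zero (hfS x hx))⟩

theorem mul (hf : HasContinuousLogOn f S) (hg : HasContinuousLogOn g S) :
    HasContinuousLogOn (fun x => f x * g x) S := by
  obtain ⟨h, hh, hhf⟩ := hf
  obtain ⟨k, hk, hkg⟩ := hg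
  exact ⟨fun x => h x + k x, hh.add hk, fun x hx => by rw [Complex.exp_add, hhf x hx, hkg x hx]⟩

theorem inv (hf : HasContinuousLogOn f S) : HasContinuousLogOn (fun x => (f x)⁻¹) S := by
  obtain ⟨h, hh, hhf⟩ := hf
  exact ⟨fun x => -h x, hh.neg, fun x hx => by rw [Complex.exp_neg, hhf x hx]⟩

theorem neg (hf : HasContinuousLogOn f S) : HasContinuousLogOn (fun x => -f x) S := by
  obtain ⟨h, hh, hhf⟩ := hf
  exact ⟨fun x => h x + Real.pi * Complex.I, hh.add continuousOn_const, fun x hx => by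
    rw [Complex.exp_add, Complex.exp_pi_mul_I, hhf x hx, mul_neg_one]⟩

theorem congr (hf : HasContinuousLogOn f S) (hfg : ∀ x ∈ S, f x = g x) :
    HasContinuousLogOn g S := by
  obtain ⟨h, hh, hhf⟩ := hf
  exact ⟨h, hh, fun x hx => (hhf x hx).trans (hfg x hx)⟩

end HasContinuousLogOn

theorem hasContinuousLogOn_div_sub_of_dist_lt {F : Set ℂ} {u v : ℂ} {ε : ℝ}
    (hu : Disjoint (ball u ε) F) (huv : dist u v < ε) :
    HasContinuousLogOn (fun z => (z - v) / (z - u)) F := by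
  have hεz (z : ℂ) (hz : z ∈ F) : ε ≤ ‖z - u‖ := by
    rw [← dist_eq_norm]
    exact not_lt.1 fun h => disjoint_right.1 hu hz (mem_ball.2 h)
  have hne (z : ℂ) (hz : z ∈ F) : z - u ≠ 0 :=
    norm_pos_iff.1 ((dist_nonneg.trans_lt huv).trans_le (hεz z hz))
  refine .of_mem_slitPlane (.div (by fun_prop) (by fun_prop) hne) fun z hz => ?_
  have hsplit : (z - v) / (z - u) = 1 + (u - v) / (z - u) := by
    rw [eq_comm, ← div_self (hne z hz), ← add_div, sub_add_sub_cancel]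
  rw [hsplit]
  apply Complex.mem_slitPlane_of_norm_lt_one
  rw [norm_div, div_lt_one (norm_pos_iff.2 (hne z hz)), ← dist_eq_norm]
  exact huv.trans_le (hεz z hz)

theorem hasContinuousLogOn_div_sub {F : Set ℂ} (hF : IsClosed F) (hFc : IsPreconnected Fᶜ)
    {p q : ℂ} (hp : p ∉ F) (hq : q ∉ F) :
    HasContinuousLogOn (fun z => (z - p) / (z - q)) F := by
  refine hFc.induction₂' (fun u v => HasContinuousLogOn (fun z => (z - u) / (z - v)) F)
    (fun u hu => ?_) (fun u v w _ hv _ huv hvw => ?_) hp hq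
  · obtain ⟨ε, hε, hball⟩ := Metric.isOpen_iff.1 hF.isOpen_compl u hu
    filter_upwards [mem_nhdsWithin_of_mem_nhds (ball_mem_nhds u hε)] with v hv
    have hvu := hasContinuousLogOn_div_sub_of_dist_lt (disjoint_left.2 hball)
      (mem_ball'.1 hv)
    exact ⟨hvu.inv.congr fun z _ => inv_div _ _, hvu⟩
  · refine (huv.mul hvw).congr fun z hz => div_mul_div_cancel₀ ?_
    exact sub_ne_zero.2 fun h => hv (h ▸ hz)

theorem hasContinuousLogOn_sub {F : Set ℂ} (hF : IsCompact F) (hFc : IsPreconnected Fᶜ) {p : ℂ}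
    (hp : p ∉ F) : HasContinuousLogOn (fun z => z - p) F := by
  obtain ⟨R, hR⟩ := hF.isBounded.exists_norm_le
  have hre (z : ℂ) (hz : z ∈ F) : z.re < R + 1 :=
    ((Complex.re_le_norm z).trans (hR z hz)).trans_lt (lt_add_one R)
  have hq : ((R + 1 : ℝ) : ℂ) ∉ F := fun h => (hre _ h).ne (Complex.ofReal_re _)
  have hlog : HasContinuousLogOn (fun z => ((R + 1 : ℝ) : ℂ) - z) F :=
    .of_mem_slitPlane (by fun_prop) fun z hz => Or.inl <| by
      rw [Complex.sub_re, Complex.ofReal_re]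
      exact sub_pos.2 (hre z hz)
  refine ((hasContinuousLogOn_div_sub hF.isClosed hFc hp hq).mul hlog.neg).congr fun z hz => ?_
  rw [neg_sub]
  exact div_mul_cancel₀ _ (sub_ne_zero.2 fun h => hq (h ▸ hz))

theorem sub_eq_sub_of_exp_eq_const_mul_exp {X : Type*} [TopologicalSpace X] {S : Set X}
    (hS : IsPreconnected S) {h l : X → ℂ} (hh : ContinuousOn h S) (hl : ContinuousOn l S) {c : ℂ}
    (hexp : ∀ x ∈ S, Complex.exp (h x) = c * Complex.exp (l x)) {x y : X} (hx : x ∈ S)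
    (hy : y ∈ S) : h x - l x = h y - l y := by
  have hconst (x : X) (hx : x ∈ S) : Complex.exp (h x - l x) = c := by
    rw [Complex.exp_sub, hexp x hx, mul_div_cancel_right₀ _ (Complex.exp_ne_zero _)]
  exact Complex.isCoveringMap_exp.constOn_of_comp hS (hh.sub hl)
    (fun x hx y hy => Subtype.ext ((hconst x hx).trans (hconst y hy).symm)) hx hy

theorem im_sub_eq_arg_sub_of_mul_mem_slitPlane {S : Set ℂ} (hS : IsPreconnected S) {h : ℂ → ℂ}
    (hh : ContinuousOn h S) {c p : ℂ} (hexp : ∀ z ∈ S, Complex.exp (h z) = z - p)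
    (hslit : ∀ z ∈ S, c * (z - p) ∈ Complex.slitPlane) {x y : ℂ} (hx : x ∈ S) (hy : y ∈ S) :
    (h x).im - (h y).im = (c * (x - p)).arg - (c * (y - p)).arg := by
  have hc : c ≠ 0 := left_ne_zero_of_mul (Complex.slitPlane_ne_zero (hslit x hx))
  have hlog := sub_eq_sub_of_exp_eq_const_mul_exp hS hh
    (.clog (by fun_prop) hslit) (c := c⁻¹) (fun z hz => by
      rw [hexp z hz, Complex.exp_log (Complex.slitPlane_ne_zero (hslit z hz)),
        inv_mul_cancel_left₀ hc]) hx hy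
  have him := congrArg Complex.im (sub_eq_sub_iff_sub_eq_sub.1 hlog)
  simpa only [Complex.sub_im, Complex.log_im] using him

-- Going from `x` to `y` above `p` turns by an angle in `(-π, 0)`, below `p` by an angle in
-- `(0, π)`, while both are the increment of a single continuous logarithm of `z - p` on `F`.
theorem re_le_or_le_re_of_mem_inter {F : Set ℂ} (hF : IsCompact F) (hFc : IsPreconnected Fᶜ)
    {p : ℂ} (hp : p ∉ F) {A B : Set ℂ} (hA : IsPreconnected A) (hB : IsPreconnected B)
    (hAF : A ⊆ F) (hBF : B ⊆ F) (hAp : ∀ z ∈ A, z.re = p.re → p.im < z.im)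
    (hBp : ∀ z ∈ B, z.re = p.re → z.im < p.im) :
    (∀ z ∈ A ∩ B, p.re ≤ z.re) ∨ ∀ z ∈ A ∩ B, z.re ≤ p.re := by
  by_contra! ⟨⟨x, hx, hxp⟩, y, hy, hyp⟩
  obtain ⟨h, hh, hexp⟩ := hasContinuousLogOn_sub hF hFc hp
  have hslit {c z : ℂ} (hc : c.re = 0) (hz : z.re = p.re → c.im * (z.im - p.im) < 0)
      (hc' : c.im ≠ 0) : c * (z - p) ∈ Complex.slitPlane := by
    rw [Complex.mem_slitPlane_iff, Complex.mul_re, Complex.mul_im, Complex.sub_re, Complex.sub_im,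
      hc, zero_mul, zero_mul, zero_sub, zero_add, neg_pos]
    by_cases hre : z.re = p.re
    · exact Or.inl (hz hre)
    · exact Or.inr (mul_ne_zero hc' (sub_ne_zero.2 hre))
  have hargA := im_sub_eq_arg_sub_of_mul_mem_slitPlane hA (hh.mono hAF) (c := -Complex.I)
    (fun z hz => hexp z (hAF hz))
    (fun z hz => hslit (by simp) (fun hre => by simpa using hAp z hz hre) (by simp)) hx.1 hy.1
  have hargB := im_sub_eq_arg_sub_of_mul_mem_slitPlane hB (hh.mono hBF) (c := Complex.I)
    (fun z hz => hexp z (hBF hz))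
    (fun z hz => hslit (by simp) (fun hre => by simpa using hBp z hz hre) (by simp)) hx.2 hy.2
  have hargx := Complex.arg_neg_eq_arg_sub_pi_of_im_pos (x := -Complex.I * (x - p))
    (by simpa using hxp)
  have hargy := Complex.arg_neg_eq_arg_add_pi_of_im_neg (x := -Complex.I * (y - p))
    (by simpa using hyp)
  rw [neg_mul, neg_neg] at hargx hargy
  rw [neg_mul, neg_mul] at hargA
  linarith [Real.pi_pos]

end Logarithm

section UpperGraph

theorem chord_le_of_concaveOn {S : Set ℝ} {f : ℝ → ℝ} (hf : ConcaveOn ℝ S f) {x e u : ℝ}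
    (hx : x ∈ S) (he : e ∈ S) (hu : u ∈ segment ℝ x e) :
    f x + (u - x) / (e - x) * (f e - f x) ≤ f u := by
  rw [segment_eq_image'] at hu
  obtain ⟨t, ht, rfl⟩ := hu
  rcases eq_or_ne e x with rfl | hne
  · simp only [sub_self, mul_zero, smul_zero, add_zero, le_refl]
  · have hcomb := hf.2 hx he (sub_nonneg.2 ht.2) ht.1 (sub_add_cancel 1 t)
    have hpoint : (1 - t) • x + t • e = x + t • (e - x) := by simp only [smul_eq_mul]; ring
    rw [hpoint] at hcomb
    refine le_of_eq_of_le ?_ hcomb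
    simp only [smul_eq_mul, add_sub_cancel_left, mul_div_cancel_right₀ _ (sub_ne_zero.2 hne)]
    ring

theorem lowerSemicontinuousOn_Icc_of_concaveOn {a b : ℝ} {f : ℝ → ℝ}
    (hf : ConcaveOn ℝ (Icc a b) f) : LowerSemicontinuousOn f (Icc a b) := by
  intro x hx c hc
  have hchord (e : ℝ) : ∀ᶠ u in nhds x, c < f x + (u - x) / (e - x) * (f e - f x) := by
    have hcont : Continuous fun u => f x + (u - x) / (e - x) * (f e - f x) := by fun_prop
    refine hcont.continuousAt.eventually_const_lt ?_
    simpa only [sub_self, zero_div, zero_mul, add_zero]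
  have hab : a ≤ b := hx.1.trans hx.2
  filter_upwards [mem_nhdsWithin_of_mem_nhds (hchord a), mem_nhdsWithin_of_mem_nhds (hchord b),
    self_mem_nhdsWithin] with u hua hub hu
  rcases le_total u x with hux | hxu
  · refine hua.trans_le (chord_le_of_concaveOn hf hx (left_mem_Icc.2 hab) ?_)
    rw [segment_symm, segment_eq_Icc hx.1]
    exact ⟨hu.1, hux⟩
  · refine hub.trans_le (chord_le_of_concaveOn hf hx (right_mem_Icc.2 hab) ?_)
    rw [segment_eq_Icc hx.2]
    exact ⟨hxu, hu.2⟩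

/-- The upper boundary of a planar set, as a function on its projection to the real axis. -/
def upperGraph (K : Set ℂ) (x : ℝ) : ℝ := sSup {y | (⟨x, y⟩ : ℂ) ∈ K}

theorem continuous_complexMk (x : ℝ) : Continuous fun y : ℝ => (⟨x, y⟩ : ℂ) :=
  Complex.equivRealProdCLM.symm.continuous.comp (Continuous.prodMk_right x)

theorem isGreatest_upperGraph {K : Set ℂ} (hK : IsCompact K) {z : ℂ} (hz : z ∈ K) :
    IsGreatest {y | (⟨z.re, y⟩ : ℂ) ∈ K} (upperGraph K z.re) := by
  have hbdd : Bornology.IsBounded {y | (⟨z.re, y⟩ : ℂ) ∈ K} :=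
    (hK.image Complex.continuous_im).isBounded.subset fun y hy => ⟨_, hy, rfl⟩
  have hcompact : IsCompact {y | (⟨z.re, y⟩ : ℂ) ∈ K} :=
    isCompact_of_isClosed_isBounded (hK.isClosed.preimage (continuous_complexMk z.re)) hbdd
  exact hcompact.isGreatest_sSup ⟨z.im, hz⟩

theorem concaveOn_upperGraph {K : Set ℂ} (hK : IsCompact K) (hconv : Convex ℝ K) :
    ConcaveOn ℝ (Complex.re '' K) (upperGraph K) := by
  refine ⟨hconv.linear_image Complex.reLm, ?_⟩
  rintro _ ⟨z, hz, rfl⟩ _ ⟨w, hw, rfl⟩ s t hs ht hst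
  have hmem := hconv (isGreatest_upperGraph hK hz).1 (isGreatest_upperGraph hK hw).1 hs ht hst
  have hle := (isGreatest_upperGraph hK hmem).2 hmem
  simpa using hle

theorem upperSemicontinuousOn_upperGraph {K : Set ℂ} (hK : IsCompact K) :
    UpperSemicontinuousOn (upperGraph K) (Complex.re '' K) := by
  rintro _ ⟨w, -, rfl⟩ c hc
  have hT : IsClosed (Complex.re '' (K ∩ {z | c ≤ z.im})) :=
    ((hK.inter_right (isClosed_le continuous_const Complex.continuous_im)).image
      Complex.continuous_re).isClosed
  have hwT : w.re ∉ Complex.re '' (K ∩ {z | c ≤ z.im}) := by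
    rintro ⟨z, ⟨hz, hcz⟩, hzw⟩
    exact (hcz.trans ((isGreatest_upperGraph hK hz).2 hz)).not_gt (hzw ▸ hc)
  filter_upwards [mem_nhdsWithin_of_mem_nhds (hT.isOpen_compl.mem_nhds hwT),
    self_mem_nhdsWithin] with _ huT ⟨z, hz, hzu⟩
  subst hzu
  exact not_le.1 fun h => huT ⟨_, ⟨(isGreatest_upperGraph hK hz).1, h⟩, rfl⟩

theorem continuousOn_upperGraph {K : Set ℂ} (hK : IsCompact K) (hconv : Convex ℝ K) {a b : ℝ}
    (hab : Icc a b ⊆ Complex.re '' K) : ContinuousOn (upperGraph K) (Icc a b) :=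
  continuousOn_iff_lower_upperSemicontinuousOn.2
    ⟨lowerSemicontinuousOn_Icc_of_concaveOn
      ((concaveOn_upperGraph hK hconv).subset hab (convex_Icc a b)),
      (upperSemicontinuousOn_upperGraph hK).mono hab⟩

variable {M : Set ℂ}

theorem lt_upperGraph_closure (hM : IsOpen M) (hbdd : Bornology.IsBounded M) {z : ℂ}
    (hz : z ∈ M) : z.im < upperGraph (closure M) z.re := by
  obtain ⟨y, hzy, hy⟩ := (((hM.preimage (continuous_complexMk z.re)).eventually_mem
    hz).filter_mono nhdsWithin_le_nhds).and (self_mem_nhdsWithin (s := Ioi z.im)) |>.exists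
  exact lt_of_lt_of_le hy <|
    (isGreatest_upperGraph hbdd.isCompact_closure (subset_closure hz)).2 (subset_closure hzy)

theorem mem_of_lt_upperGraph_closure (hM : IsOpen M) (hconv : Convex ℝ M)
    (hbdd : Bornology.IsBounded M) {w z : ℂ} (hw : w ∈ M) (hre : w.re = z.re) (him : w.im ≤ z.im)
    (hz : z.im < upperGraph (closure M) z.re) : z ∈ M := by
  rcases him.eq_or_lt with heq | hlt
  · rwa [← Complex.ext hre heq]
  have htop := (isGreatest_upperGraph hbdd.isCompact_closure (subset_closure hw)).1
  rw [hre] at htop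
  rw [← hM.interior_eq] at hw ⊢
  refine hconv.openSegment_interior_closure_subset_interior hw htop ?_
  obtain ⟨s, t, hs, ht, hst, hcomb⟩ := openSegment_eq_Ioo (hlt.trans hz) ▸ mem_Ioo.2 ⟨hlt, hz⟩
  refine ⟨s, t, hs, ht, hst, Complex.ext ?_ ?_⟩
  · simp [hre, ← add_mul, hst]
  · simpa using hcomb

theorem exists_graph_bounds (hM : IsOpen M) (hconv : Convex ℝ M) (hbdd : Bornology.IsBounded M) :
    ∃ l u : ℝ → ℝ, (∀ z : ℂ, z.re ∈ Complex.re '' M → (z ∈ M ↔ z.im ∈ Ioo (l z.re) (u z.re))) ∧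
      ∀ a b, Icc a b ⊆ closure (Complex.re '' M) →
        ContinuousOn l (Icc a b) ∧ ContinuousOn u (Icc a b) := by
  set M' : Set ℂ := Complex.conjLIE ⁻¹' M with hM'
  have hM'open : IsOpen M' := hM.preimage Complex.conjLIE.continuous
  have hconv' : Convex ℝ M' := hconv.linear_preimage Complex.conjLIE.toLinearEquiv.toLinearMap
  have hbdd' : Bornology.IsBounded M' := Complex.conjLIE.antilipschitz.isBounded_preimage hbdd
  have hre' : Complex.re '' M' = Complex.re '' M := by
    rw [hM', ← Complex.conjLIE_symm, ← Complex.conjLIE.image_eq_preimage_symm, image_image]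
    rfl
  have hproj {L : Set ℂ} (hL : Bornology.IsBounded L) :
      closure (Complex.re '' L) ⊆ Complex.re '' closure L :=
    closure_minimal (image_mono subset_closure)
      (hL.isCompact_closure.image Complex.continuous_re).isClosed
  have hconj {z : ℂ} (hz : z ∈ M) : Complex.conjLIE z ∈ M' := by
    rwa [hM', mem_preimage, Complex.conjLIE_apply, Complex.conjLIE_apply, Complex.conj_conj]
  refine ⟨fun x => -upperGraph (closure M') x, upperGraph (closure M), ?_, fun a b hab =>
    ⟨(continuousOn_upperGraph hbdd'.isCompact_closure hconv'.closure
      ((hre' ▸ hab).trans (hproj hbdd'))).neg,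
    continuousOn_upperGraph hbdd.isCompact_closure hconv.closure (hab.trans (hproj hbdd))⟩⟩
  rintro z ⟨w, hw, hwz⟩
  refine ⟨fun hz => ⟨neg_lt.1 (lt_upperGraph_closure hM'open hbdd' (hconj hz)),
    lt_upperGraph_closure hM hbdd hz⟩, fun ⟨hl, hu⟩ => ?_⟩
  rcases le_total w.im z.im with hwz' | hwz'
  · exact mem_of_lt_upperGraph_closure hM hconv hbdd hw hwz hwz' hu
  · have hz' : Complex.conjLIE z ∈ M' := mem_of_lt_upperGraph_closure hM'open hconv' hbdd'
      (hconj hw) hwz (neg_le_neg hwz') (neg_lt.1 hl)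
    rwa [hM', mem_preimage, Complex.conjLIE_apply, Complex.conjLIE_apply,
      Complex.conj_conj] at hz'

end UpperGraph

section Band

/-- A pair of real functions, encoding the planar region strictly between their graphs. Nothing is
required of the functions here; see `Band.IsProper`. -/
structure Band where
  lower : ℝ → ℝ
  upper : ℝ → ℝ

namespace Band

/-- The heights at which the vertical line over `x` meets the region encoded by a band. -/
def fiber (p : Band) (x : ℝ) : Set ℝ := Ioo (p.lower x) (p.upper x)

/-- A band bounded by continuous functions on `I`, with nonempty fibers over `D`. In the
applications `I` is the closure of `D`. -/
structure IsProper (D I : Set ℝ) (p : Band) : Prop where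
  continuousOn_lower : ContinuousOn p.lower I
  continuousOn_upper : ContinuousOn p.upper I
  lower_lt_upper : ∀ x ∈ D, p.lower x < p.upper x

/-- The band `p` lies below the band `q` over `D`. -/
def Below (D : Set ℝ) (p q : Band) : Prop := ∀ x ∈ D, p.upper x ≤ q.lower x

/-- The bands `p` and `q` have overlapping fibers over each point of `D`. -/
def Meets (D : Set ℝ) (p q : Band) : Prop :=
  ∀ x ∈ D, p.lower x < q.upper x ∧ q.lower x < p.upper x

/-- The relative position of the bands `p` and `q` does not change over `D`. -/
def Comparable (D : Set ℝ) (p q : Band) : Prop := Below D p q ∨ Below D q p ∨ Meets D p q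

/-- The smallest band containing two given ones. -/
def merge (p q : Band) : Band :=
  ⟨fun x => min (p.lower x) (q.lower x), fun x => max (p.upper x) (q.upper x)⟩

variable {D I : Set ℝ} {p q r : Band}

theorem Meets.symm (h : Meets D p q) : Meets D q p := fun x hx => (h x hx).symm

theorem Comparable.symm (h : Comparable D p q) : Comparable D q p := by
  rcases h with h | h | h
  exacts [Or.inr (Or.inl h), Or.inl h, Or.inr (Or.inr h.symm)]

theorem Comparable.refl (hp : IsProper D I p) : Comparable D p p :=
  Or.inr (Or.inr fun x hx => ⟨hp.lower_lt_upper x hx, hp.lower_lt_upper x hx⟩)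

theorem IsProper.merge (hp : IsProper D I p) (hq : IsProper D I q) : IsProper D I (p.merge q) where
  continuousOn_lower := hp.continuousOn_lower.inf hq.continuousOn_lower
  continuousOn_upper := hp.continuousOn_upper.sup hq.continuousOn_upper
  lower_lt_upper x hx :=
    (min_le_left _ _).trans_lt ((hp.lower_lt_upper x hx).trans_le (le_max_left _ _))

theorem fiber_merge {x : ℝ} (hpq : p.lower x < q.upper x) (hqp : q.lower x < p.upper x) :
    (p.merge q).fiber x = p.fiber x ∪ q.fiber x :=
  (Ioo_union_Ioo' hqp hpq).symm

theorem Comparable.merge (hD : D.Nonempty) (hr : IsProper D I r) (hp : Comparable D r p)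
    (hq : Comparable D r q) (hpq : Meets D p q) : Comparable D r (p.merge q) := by
  obtain ⟨x₀, hx₀⟩ := hD
  have hpq₀ := hpq x₀ hx₀
  have hr₀ := hr.lower_lt_upper x₀ hx₀
  rcases hp with hp | hp | hp
  · rcases hq with hq | hq | hq
    · exact Or.inl fun x hx => le_min (hp x hx) (hq x hx)
    · exact absurd hpq₀.1 (by linarith [hp x₀ hx₀, hq x₀ hx₀])
    · exact Or.inr (Or.inr fun x hx => ⟨(hq x hx).1.trans_le (le_max_right _ _),
        (min_le_right _ _).trans_lt (hq x hx).2⟩)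
  · rcases hq with hq | hq | hq
    · exact absurd hpq₀.2 (by linarith [hp x₀ hx₀, hq x₀ hx₀])
    · exact Or.inr (Or.inl fun x hx => max_le (hp x hx) (hq x hx))
    · exact Or.inr (Or.inr fun x hx => ⟨(hq x hx).1.trans_le (le_max_right _ _),
        (min_le_right _ _).trans_lt (hq x hx).2⟩)
  · exact Or.inr (Or.inr fun x hx => ⟨(hp x hx).1.trans_le (le_max_left _ _),
      (min_le_left _ _).trans_lt (hp x hx).2⟩)

theorem le_or_le_of_disjoint_fiber {x : ℝ} (hp : p.lower x < p.upper x)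
    (hq : q.lower x < q.upper x) (h : Disjoint (p.fiber x) (q.fiber x)) :
    p.upper x ≤ q.lower x ∨ q.upper x ≤ p.lower x := by
  by_contra! hn
  obtain ⟨y, hy, hy'⟩ := exists_between
    (max_lt (lt_min hp hn.2) (lt_min hn.1 hq) : max (p.lower x) (q.lower x) < _)
  rw [max_lt_iff] at hy
  rw [lt_min_iff] at hy'
  exact disjoint_left.1 h ⟨hy.1, hy'.1⟩ ⟨hy.2, hy'.2⟩

theorem comparable_of_disjoint_fiber (hD : IsPreconnected D) (hDI : D ⊆ I)
    (hp : IsProper D I p) (hq : IsProper D I q)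
    (h : ∀ x ∈ D, Disjoint (p.fiber x) (q.fiber x)) : Comparable D p q := by
  have hcase (x : ℝ) (hx : x ∈ D) := le_or_le_of_disjoint_fiber (hp.lower_lt_upper x hx)
    (hq.lower_lt_upper x hx) (h x hx)
  by_contra hn
  simp only [Comparable, Below, not_or, not_forall] at hn
  obtain ⟨⟨u, hu, hu'⟩, ⟨v, hv, hv'⟩, -⟩ := hn
  have hcont : ContinuousOn (fun x => q.lower x - p.lower x) D :=
    (hq.continuousOn_lower.mono hDI).sub (hp.continuousOn_lower.mono hDI)
  have hzero : (0 : ℝ) ∈ Icc (q.lower u - p.lower u) (q.lower v - p.lower v) :=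
    ⟨by linarith [(hcase u hu).resolve_left hu', hq.lower_lt_upper u hu],
      by linarith [(hcase v hv).resolve_right hv', hp.lower_lt_upper v hv]⟩
  obtain ⟨w, hw, hw0⟩ := hD.intermediate_value hu hv hcont hzero
  have hpw := hp.lower_lt_upper w hw
  have hqw := hq.lower_lt_upper w hw
  dsimp only at hw0
  rcases hcase w hw with h | h <;> linarith

/-- Finitely many proper bands, listed from bottom to top over `D`. -/
structure IsStack (D I : Set ℝ) (l : List Band) : Prop where
  pairwise_below : l.Pairwise (Below D)
  isProper : ∀ p ∈ l, IsProper D I p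

theorem isStack_nil : IsStack D I [] := ⟨.nil, List.forall_mem_nil _⟩

theorem isStack_cons {l : List Band} :
    IsStack D I (p :: l) ↔ (IsProper D I p ∧ ∀ q ∈ l, Below D p q) ∧ IsStack D I l :=
  ⟨fun h => ⟨⟨h.isProper p List.mem_cons_self, (List.pairwise_cons.1 h.pairwise_below).1⟩,
    (List.pairwise_cons.1 h.pairwise_below).2, (List.forall_mem_cons.1 h.isProper).2⟩,
    fun h => ⟨List.pairwise_cons.2 ⟨h.1.2, h.2.pairwise_below⟩,
      List.forall_mem_cons.2 ⟨h.1.1, h.2.isProper⟩⟩⟩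

theorem below_of_forall_le_fiber (hq : IsProper D I q)
    (h : ∀ x ∈ D, ∀ y ∈ q.fiber x, p.upper x ≤ y) : Below D p q := fun x hx =>
  le_of_forall_gt_imp_ge_of_dense fun c hc => by
    obtain ⟨y, hy, hy'⟩ := exists_between (lt_min hc (hq.lower_lt_upper x hx))
    rw [lt_min_iff] at hy'
    exact (h x hx y ⟨hy, hy'.2⟩).trans hy'.1.le

theorem forall_comparable_insert_merge [DecidableEq Band] {𝓑 : Finset Band} (hD : D.Nonempty)
    (hproper : ∀ r ∈ 𝓑, IsProper D I r) (hcomp : ∀ r ∈ 𝓑, ∀ s ∈ 𝓑, Comparable D r s)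
    (hp : p ∈ 𝓑) (hq : q ∈ 𝓑) (hpq : Meets D p q) :
    ∀ r ∈ insert (p.merge q) ((𝓑.erase p).erase q),
      ∀ s ∈ insert (p.merge q) ((𝓑.erase p).erase q), Comparable D r s := by
  have hmerge {r : Band} (hr : r ∈ 𝓑) : Comparable D r (p.merge q) :=
    .merge hD (hproper r hr) (hcomp r hr p hp) (hcomp r hr q hq) hpq
  simp only [Finset.mem_insert, Finset.mem_erase]
  rintro r (rfl | ⟨-, -, hr⟩) s (rfl | ⟨-, -, hs⟩)
  exacts [.refl ((hproper p hp).merge (hproper q hq)), (hmerge hs).symm, hmerge hr,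
    hcomp r hr s hs]

theorem exists_mem_insert_merge_iff [DecidableEq Band] {𝓑 : Finset Band} (hp : p ∈ 𝓑)
    (hq : q ∈ 𝓑) {x : ℝ} (hx : x ∈ D) (hpq : Meets D p q) (y : ℝ) :
    (∃ r ∈ insert (p.merge q) ((𝓑.erase p).erase q), y ∈ r.fiber x) ↔
      ∃ r ∈ 𝓑, y ∈ r.fiber x := by
  have hfib := fiber_merge (hpq x hx).1 (hpq x hx).2
  simp only [Finset.mem_insert, Finset.mem_erase, exists_eq_or_imp, hfib, mem_union]
  constructor
  · rintro ((hy | hy) | ⟨r, ⟨-, -, hr⟩, hy⟩)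
    exacts [⟨p, hp, hy⟩, ⟨q, hq, hy⟩, ⟨r, hr, hy⟩]
  · rintro ⟨r, hr, hy⟩
    by_cases hrp : r = p
    · exact Or.inl (Or.inl (hrp ▸ hy))
    by_cases hrq : r = q
    · exact Or.inl (Or.inr (hrq ▸ hy))
    exact Or.inr ⟨r, ⟨hrq, hrp, hr⟩, hy⟩

theorem exists_isStack (hD : D.Nonempty) (𝓑 : Finset Band) (hproper : ∀ p ∈ 𝓑, IsProper D I p)
    (hcomp : ∀ p ∈ 𝓑, ∀ q ∈ 𝓑, Comparable D p q) :
    ∃ l : List Band, IsStack D I l ∧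
      ∀ x ∈ D, ∀ y, (∃ p ∈ l, y ∈ p.fiber x) ↔ ∃ p ∈ 𝓑, y ∈ p.fiber x := by
  classical
  obtain ⟨x₀, hx₀⟩ := hD
  induction hn : 𝓑.card using Nat.strong_induction_on generalizing 𝓑 with | _ n ih => ?_
  rcases 𝓑.eq_empty_or_nonempty with rfl | hne
  · exact ⟨[], isStack_nil, fun x _ y => by simp⟩
  obtain ⟨p, hp, hpmin⟩ := 𝓑.exists_min_image (fun q => q.lower x₀) hne
  by_cases hmeet : ∃ q ∈ 𝓑.erase p, Meets D p q
  · obtain ⟨q, hq, hpq⟩ := hmeet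
    have hq𝓑 := Finset.mem_of_mem_erase hq
    have hcard : (insert (p.merge q) ((𝓑.erase p).erase q)).card < n := by
      refine (Finset.card_insert_le _ _).trans_lt ?_
      rw [Finset.card_erase_add_one hq, ← hn]
      exact Finset.card_erase_lt_of_mem hp
    obtain ⟨l, hl, hfib⟩ := ih _ hcard _
      (Finset.forall_mem_insert _ _ _ |>.2 ⟨(hproper p hp).merge (hproper q hq𝓑), fun r hr =>
        hproper r (Finset.mem_of_mem_erase (Finset.mem_of_mem_erase hr))⟩)
      (forall_comparable_insert_merge ⟨x₀, hx₀⟩ hproper hcomp hp hq𝓑 hpq) rfl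
    exact ⟨l, hl, fun x hx y => (hfib x hx y).trans (exists_mem_insert_merge_iff hp hq𝓑 hx hpq y)⟩
  · have hbelow (q : Band) (hq : q ∈ 𝓑.erase p) : Below D p q := by
      have hq𝓑 := Finset.mem_of_mem_erase hq
      refine (hcomp p hp q hq𝓑).resolve_right (not_or.2 ⟨fun hqp => ?_, fun h => hmeet ⟨q, hq, h⟩⟩)
      exact ((hpmin q hq𝓑).trans_lt ((hproper q hq𝓑).lower_lt_upper x₀ hx₀)).not_ge (hqp x₀ hx₀)
    obtain ⟨l, hl, hfib⟩ := ih _ (hn ▸ Finset.card_erase_lt_of_mem hp) (𝓑.erase p)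
      (fun q hq => hproper q (Finset.mem_of_mem_erase hq)) (fun q hq r hr =>
        hcomp q (Finset.mem_of_mem_erase hq) r (Finset.mem_of_mem_erase hr)) rfl
    refine ⟨p :: l, isStack_cons.2 ⟨⟨hproper p hp, fun q hq => ?_⟩, hl⟩, fun x hx y => ?_⟩
    · refine below_of_forall_le_fiber (hl.isProper q hq) fun x hx y hy => ?_
      obtain ⟨r, hr, hyr⟩ := (hfib x hx y).1 ⟨q, hq, hy⟩
      exact (hbelow r hr x hx).trans hyr.1.le
    · rw [← Finset.insert_erase hp]
      simp only [List.mem_cons, Finset.mem_insert, exists_eq_or_imp, hfib x hx y]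

/-- The union over `[a, b]` of the gaps between consecutive bands of a list. -/
def gapCells (a b : ℝ) : List Band → Set ℂ
  | p :: q :: l => graphCell a b p.upper q.lower ∪ gapCells a b (q :: l)
  | _ => ∅

variable {a b : ℝ} {l : List Band}

theorem re_mem_Icc_of_mem_gapCells {z : ℂ} (hz : z ∈ gapCells a b l) : z.re ∈ Icc a b := by
  fun_induction gapCells with
  | case1 p q l ih => exact hz.elim And.left ih
  | case2 => exact hz.elim

theorem Below.le_of_mem_Icc (hDI : D ⊆ Icc a b) (hID : Icc a b ⊆ closure D)
    (hp : IsProper D (Icc a b) p) (hq : IsProper D (Icc a b) q) (h : Below D p q) :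
    ∀ x ∈ Icc a b, p.upper x ≤ q.lower x := fun x hx =>
  ContinuousWithinAt.closure_le (hID hx) ((hp.continuousOn_upper x hx).mono hDI)
    ((hq.continuousOn_lower x hx).mono hDI) h

theorem IsStack.lower_le_lower (hl : IsStack D I (p :: l)) {x : ℝ} (hx : x ∈ D)
    (hq : q ∈ p :: l) : p.lower x ≤ q.lower x := by
  obtain ⟨⟨hp, hbelow⟩, -⟩ := isStack_cons.1 hl
  rcases List.mem_cons.1 hq with rfl | hq
  · exact le_rfl
  · exact (hp.lower_lt_upper x hx).le.trans (hbelow q hq x hx)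

theorem IsStack.upper_le_upper (hl : IsStack D I (p :: l)) {x : ℝ} (hx : x ∈ D)
    (hq : q ∈ p :: l) : p.upper x ≤ q.upper x := by
  obtain ⟨⟨-, hbelow⟩, htail⟩ := isStack_cons.1 hl
  rcases List.mem_cons.1 hq with rfl | hq
  · exact le_rfl
  · exact (hbelow q hq x hx).trans ((htail.isProper q hq).lower_lt_upper x hx).le

theorem IsStack.mem_gapCells_iff (hl : IsStack D I l) {z : ℂ} (hz : z.re ∈ Icc a b)
    (hzD : z.re ∈ D) : z ∈ gapCells a b l ↔ (∀ p ∈ l, z.im ∉ p.fiber z.re) ∧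
      (∃ p ∈ l, p.upper z.re ≤ z.im) ∧ ∃ p ∈ l, z.im ≤ p.lower z.re := by
  induction l with
  | nil => exact ⟨False.elim, fun h => by simpa using h.2.1⟩
  | cons p l ih =>
    obtain ⟨⟨hp, hbelow⟩, htail⟩ := isStack_cons.1 hl
    have hp_lt := hp.lower_lt_upper z.re hzD
    constructor
    · cases l with
      | nil => exact False.elim
      | cons q l =>
        rintro (⟨-, hpz, hqz⟩ | hzl)
        · refine ⟨List.forall_mem_cons.2 ⟨fun h => hpz.not_gt h.2, fun r hr h => ?_⟩,
            ⟨p, List.mem_cons_self, hpz⟩, q, by simp, hqz⟩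
          exact (hqz.trans (htail.lower_le_lower hzD hr)).not_gt h.1
        · obtain ⟨hfib, ⟨r, hr, hrz⟩, s, hs, hsz⟩ := (ih htail).1 hzl
          refine ⟨List.forall_mem_cons.2 ⟨fun h => ?_, hfib⟩,
            ⟨r, List.mem_cons_of_mem _ hr, hrz⟩, s, List.mem_cons_of_mem _ hs, hsz⟩
          exact ((hl.upper_le_upper hzD (List.mem_cons_of_mem _ hr)).trans hrz).not_gt h.2
    · rintro ⟨hfib, ⟨r, hr, hrz⟩, s, hs, hsz⟩
      have hpz : p.upper z.re ≤ z.im := (hl.upper_le_upper hzD hr).trans hrz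
      have hsl : s ∈ l := (List.mem_cons.1 hs).resolve_left fun h =>
        (hsz.trans_lt (h ▸ hp_lt)).not_ge hpz
      cases l with
      | nil => exact absurd hsl List.not_mem_nil
      | cons q l =>
        by_cases hqz : z.im ≤ q.lower z.re
        · exact Or.inl ⟨hz, hpz, hqz⟩
        · have hqu : q.upper z.re ≤ z.im :=
            not_lt.1 fun h => hfib q (by simp) ⟨not_le.1 hqz, h⟩
          exact Or.inr ((ih htail).2
            ⟨(List.forall_mem_cons.1 hfib).2, ⟨q, List.mem_cons_self, hqu⟩, s, hsl, hsz⟩)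

theorem IsStack.upper_le_of_mem_gapCells (hl : IsStack D I (p :: l)) {z : ℂ}
    (hz : z ∈ gapCells a b (p :: l)) (hzD : z.re ∈ D) : p.upper z.re ≤ z.im := by
  obtain ⟨-, ⟨q, hq, hqz⟩, -⟩ := (hl.mem_gapCells_iff (re_mem_Icc_of_mem_gapCells hz) hzD).1 hz
  exact (hl.upper_le_upper hzD hq).trans hqz

theorem IsStack.gapCells_subset_of_dense {F : Set ℂ} (hF : IsClosed F) (hDI : D ⊆ Icc a b)
    (hID : Icc a b ⊆ closure D) (hl : IsStack D (Icc a b) l)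
    (hDF : ∀ z ∈ gapCells a b l, z.re ∈ D → z ∈ F) : gapCells a b l ⊆ F := by
  fun_induction gapCells with
  | case1 p q l ih =>
    obtain ⟨⟨hp, hbelow⟩, htail⟩ := isStack_cons.1 hl
    have hq := htail.isProper q List.mem_cons_self
    have hpq := (hbelow q List.mem_cons_self).le_of_mem_Icc hDI hID hp hq
    exact union_subset (graphCell_subset_of_dense hF hp.continuousOn_upper hq.continuousOn_lower
      hpq hDI hID fun z hz => hDF z (Or.inl hz)) (ih htail fun z hz => hDF z (Or.inr hz))
  | case2 => exact empty_subset F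

theorem exists_isProper_of_convex {M : Set ℂ} (hM : IsOpen M) (hconv : Convex ℝ M)
    (hbdd : Bornology.IsBounded M) (hDM : D ⊆ Complex.re '' M) (hID : Icc a b ⊆ closure D) :
    ∃ p : Band, IsProper D (Icc a b) p ∧
      ∀ z : ℂ, z.re ∈ D → (z ∈ M ↔ z.im ∈ p.fiber z.re) := by
  obtain ⟨l, u, hlu, hcont⟩ := exists_graph_bounds hM hconv hbdd
  obtain ⟨hl, hu⟩ := hcont a b (hID.trans (closure_mono hDM))
  refine ⟨⟨l, u⟩, ⟨hl, hu, fun x hx => ?_⟩, fun z hz => hlu z (hDM hz)⟩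
  obtain ⟨z, hz, rfl⟩ := hDM hx
  exact lt_trans ((hlu z (hDM hx)).1 hz).1 ((hlu z (hDM hx)).1 hz).2

theorem exists_isStack_of_convex {ι : Type*} [Finite ι] {M : ι → Set ℂ}
    (hM : ∀ i, IsOpen (M i)) (hconv : ∀ i, Convex ℝ (M i)) (hbdd : ∀ i, Bornology.IsBounded (M i))
    (hD : IsConnected D) (hDI : D ⊆ Icc a b) (hID : Icc a b ⊆ closure D)
    (hinter : ∀ i j, D ⊆ Complex.re '' (M i ∩ M j) ∨ Disjoint D (Complex.re '' (M i ∩ M j))) :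
    ∃ l : List Band, IsStack D (Icc a b) l ∧
      ∀ z : ℂ, z.re ∈ D → ((∃ p ∈ l, z.im ∈ p.fiber z.re) ↔ ∃ i, z ∈ M i) := by
  classical
  have := Fintype.ofFinite {i // D ⊆ Complex.re '' M i}
  choose band hproper hfib using fun i : {i // D ⊆ Complex.re '' M i} =>
    exists_isProper_of_convex (hM i) (hconv i) (hbdd i) i.2 hID
  have hcomp (i j : {i // D ⊆ Complex.re '' M i}) : Comparable D (band i) (band j) := by
    rcases hinter i j with h | h
    · refine Or.inr (Or.inr fun x hx => ?_)
      obtain ⟨z, ⟨hzi, hzj⟩, rfl⟩ := h hx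
      have hi := (hfib i z hx).1 hzi
      have hj := (hfib j z hx).1 hzj
      exact ⟨hi.1.trans hj.2, hj.1.trans hi.2⟩
    · refine comparable_of_disjoint_fiber hD.isPreconnected hDI (hproper i) (hproper j)
        fun x hx => disjoint_left.2 fun y hyi hyj => disjoint_left.1 h hx ⟨⟨x, y⟩, ⟨?_, ?_⟩, rfl⟩
      exacts [(hfib i ⟨x, y⟩ hx).2 hyi, (hfib j ⟨x, y⟩ hx).2 hyj]
  obtain ⟨l, hl, hlfib⟩ := exists_isStack hD.nonempty (Finset.univ.image band)
    (Finset.forall_mem_image.2 fun i _ => hproper i)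
    (Finset.forall_mem_image.2 fun i _ => Finset.forall_mem_image.2 fun j _ => hcomp i j)
  refine ⟨l, hl, fun z hz => (hlfib z.re hz z.im).trans ?_⟩
  simp only [Finset.mem_image, Finset.mem_univ, true_and, exists_exists_eq_and]
  constructor
  · exact fun ⟨i, hi⟩ => ⟨i, (hfib i z hz).2 hi⟩
  · rintro ⟨i, hi⟩
    have hinterself := hinter i i
    rw [inter_self] at hinterself
    have hDi := hinterself.resolve_right fun h => disjoint_left.1 h hz ⟨z, hi, rfl⟩
    exact ⟨⟨i, hDi⟩, (hfib ⟨i, hDi⟩ z hz).1 hi⟩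

variable {F : Set ℂ}

theorem hasTietzePartition_union_gapCells_self {X : Set ℂ} (hX : HasTietzePartition X) {s : ℝ}
    (hXs : ∀ z ∈ X, z.re ≠ s) (hl : IsStack {s} (Icc s s) l) :
    HasTietzePartition (X ∪ gapCells s s l) := by
  fun_induction gapCells with
  | case1 p q l ih =>
    obtain ⟨⟨hp, hbelow⟩, htail⟩ := isStack_cons.1 hl
    have hq := htail.isProper q List.mem_cons_self
    have hpq := (hbelow q List.mem_cons_self).le_of_mem_Icc (by simp) (by simp) hp hq
    have := tietzeExtension_graphCell le_rfl hp.continuousOn_upper hq.continuousOn_lower hpq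
    rw [union_comm (graphCell _ _ _ _), ← union_assoc]
    refine (ih htail).union_of_disjoint
      (isClosed_graphCell le_rfl hp.continuousOn_upper hq.continuousOn_lower hpq)
      (disjoint_left.2 fun z hz => ?_)
    have hzs : z.re = s := by simpa using hz.1
    rintro (hzX | hzl)
    · exact hXs z hzX hzs
    · exact (hz.2.2.trans_lt (hq.lower_lt_upper _ hzs)).not_ge
        (htail.upper_le_of_mem_gapCells hzl hzs)
  | case2 => rwa [union_empty]

theorem hasTietzePartition_union_graphCell (hF : IsCompact F) (hFc : IsPreconnected Fᶜ)
    {X : Set ℂ} (hX : HasTietzePartition X) (hXF : X ⊆ F) (hab : a < b)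
    (hXa : ∀ z ∈ F, z.re = a → z ∈ X) (hXb : ∀ z ∈ F, z.re = b → z ∈ X)
    (hq : IsProper (Ioo a b) (Icc a b) q)
    (hqF : ∀ z : ℂ, z.re ∈ Ioo a b → z.im ∈ q.fiber z.re → z ∉ F)
    (hqX : ∀ z ∈ X, z.re ∈ Ioo a b → q.upper z.re ≤ z.im) {f : ℝ → ℝ}
    (hf : ContinuousOn f (Icc a b)) (hfq : ∀ x ∈ Icc a b, f x ≤ q.lower x)
    (hQF : graphCell a b f q.lower ⊆ F) : HasTietzePartition (X ∪ graphCell a b f q.lower) := by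
  have ha : a ∈ Icc a b := left_mem_Icc.2 hab.le
  have hb : b ∈ Icc a b := right_mem_Icc.2 hab.le
  have hQ := tietzeExtension_graphCell hab.le hf hq.continuousOn_lower hfq
  have hE₁ := tietzeExtension_graphCell_self (hfq a ha)
  have hE₂ := tietzeExtension_graphCell_self (hfq b hb)
  rw [← graphCell_inter_re_eq ha] at hE₁
  rw [← graphCell_inter_re_eq hb] at hE₂
  refine hX.union_of_separated (isClosed_graphCell hab.le hf hq.continuousOn_lower hfq)
    (E₁ := graphCell a b f q.lower ∩ {z | z.re = a})
    (E₂ := graphCell a b f q.lower ∩ {z | z.re = b}) ?_ fun K hKX hK hK₁ hK₂ => ?_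
  · refine Subset.antisymm (fun z ⟨hzQ, hzX⟩ => ?_) (union_subset
      (fun z hz => ⟨hz.1, hXa z (hQF hz.1) hz.2⟩) fun z hz => ⟨hz.1, hXb z (hQF hz.1) hz.2⟩)
    rcases hzQ.1.1.eq_or_lt with hza | hza
    · exact Or.inl ⟨hzQ, hza.symm⟩
    rcases hzQ.1.2.eq_or_lt with hzb | hzb
    · exact Or.inr ⟨hzQ, hzb⟩
    exact absurd (hqX z hzX ⟨hza, hzb⟩)
      (hzQ.2.2.trans_lt (hq.lower_lt_upper _ ⟨hza, hzb⟩)).not_ge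
  · obtain ⟨m, hm⟩ := exists_between hab
    obtain ⟨y, hy⟩ := exists_between (hq.lower_lt_upper m hm)
    have hu : (⟨a, f a⟩ : ℂ) ∈ graphCell a b f q.lower := ⟨ha, le_rfl, hfq a ha⟩
    have hv : (⟨b, f b⟩ : ℂ) ∈ graphCell a b f q.lower := ⟨hb, le_rfl, hfq b hb⟩
    refine (re_le_or_le_re_of_mem_inter hF hFc (p := ⟨m, y⟩) (hqF ⟨m, y⟩ hm hy) hK
      (isPreconnected_of_tietzeExtension (graphCell a b f q.lower)) (hKX.trans hXF) hQF ?_ ?_).elim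
      (fun h => (h _ ⟨hK₁ ⟨hu, rfl⟩, hu⟩).not_gt hm.1)
      fun h => (h _ ⟨hK₂ ⟨hv, rfl⟩, hv⟩).not_gt hm.2
    · rintro z hz (rfl : z.re = m)
      exact hy.2.trans_le (hqX z (hKX hz) hm)
    · rintro z hz (rfl : z.re = m)
      exact hz.2.2.trans_lt hy.1

theorem hasTietzePartition_union_gapCells_Ioo (hF : IsCompact F) (hFc : IsPreconnected Fᶜ)
    {X : Set ℂ} (hX : HasTietzePartition X) (hXF : X ⊆ F) (hab : a < b)
    (hXa : ∀ z ∈ F, z.re = a → z ∈ X) (hXb : ∀ z ∈ F, z.re = b → z ∈ X)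
    (hXab : ∀ z ∈ X, z.re ∉ Ioo a b) (hl : IsStack (Ioo a b) (Icc a b) l)
    (hlF : ∀ p ∈ l, ∀ z : ℂ, z.re ∈ Ioo a b → z.im ∈ p.fiber z.re → z ∉ F)
    (hgap : gapCells a b l ⊆ F) : HasTietzePartition (X ∪ gapCells a b l) := by
  fun_induction gapCells with
  | case1 p q l ih =>
    obtain ⟨⟨hp, hbelow⟩, htail⟩ := isStack_cons.1 hl
    have hlF' := (List.forall_mem_cons.1 hlF).2
    have hq := htail.isProper q List.mem_cons_self
    have hpq := (hbelow q List.mem_cons_self).le_of_mem_Icc Ioo_subset_Icc_self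
      (closure_Ioo hab.ne).ge hp hq
    obtain ⟨hcell, hgap⟩ := union_subset_iff.1 hgap
    rw [union_comm (graphCell _ _ _ _), ← union_assoc]
    refine hasTietzePartition_union_graphCell hF hFc (ih htail hlF' hgap)
      (union_subset hXF hgap) hab (fun z hz hza => Or.inl (hXa z hz hza))
      (fun z hz hzb => Or.inl (hXb z hz hzb)) hq (hlF' q List.mem_cons_self) ?_
      hp.continuousOn_upper hpq hcell
    rintro z (hz | hz) hzab
    · exact absurd hzab (hXab z hz)
    · exact htail.upper_le_of_mem_gapCells hz hzab
  | case2 => rwa [union_empty]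

end Band

end Band

section Sweep

open Band

variable {F : Set ℂ} {D : Set ℝ} {a b : ℝ} {l : List Band}

/-- The sets `M i` are open and convex, and cover exactly the complement of `F` in the open square
`(-R, R)²`, which contains `F` in its interior with some margin. -/
structure IsConvexCover {ι : Type*} (F : Set ℂ) (R : ℝ) (M : ι → Set ℂ) : Prop where
  isOpen : ∀ i, IsOpen (M i)
  convex : ∀ i, Convex ℝ (M i)
  mem_iff : ∀ z, (∃ i, z ∈ M i) ↔ z ∉ F ∧ |z.re| < R ∧ |z.im| < R
  exists_lt : ∃ r < R, ∀ z ∈ F, |z.re| ≤ r ∧ |z.im| ≤ r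

/-- The part of `F` over `D` is what the bands of the stack `l` leave uncovered, and the closures
over `[a, b]` of the gaps between these bands still belong to `F`. -/
structure IsBandDecomposition (F : Set ℂ) (D : Set ℝ) (a b : ℝ) (l : List Band) : Prop where
  isStack : IsStack D (Icc a b) l
  notMem : ∀ p ∈ l, ∀ z : ℂ, z.re ∈ D → z.im ∈ p.fiber z.re → z ∉ F
  gapCells_subset : gapCells a b l ⊆ F
  subset_gapCells : ∀ z ∈ F, z.re ∈ D → z ∈ gapCells a b l

theorem IsConvexCover.isBounded {ι : Type*} {M : ι → Set ℂ} {R : ℝ} (hM : IsConvexCover F R M)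
    (i : ι) : Bornology.IsBounded (M i) :=
  ((isBounded_Ioo (-R) R).reProdIm (isBounded_Ioo (-R) R)).subset fun z hz =>
    ⟨abs_lt.1 ((hM.mem_iff z).1 ⟨i, hz⟩).2.1, abs_lt.1 ((hM.mem_iff z).1 ⟨i, hz⟩).2.2⟩

theorem isBandDecomposition_of_mem_fiber_iff {R r : ℝ} (hF : IsClosed F) (hrR : r < R)
    (hFr : ∀ z ∈ F, |z.im| ≤ r) (hDI : D ⊆ Icc a b) (hID : Icc a b ⊆ closure D)
    (hl : IsStack D (Icc a b) l)
    (hfib : ∀ z : ℂ, z.re ∈ D → ((∃ p ∈ l, z.im ∈ p.fiber z.re) ↔ z ∉ F ∧ |z.im| < R)) :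
    IsBandDecomposition F D a b l := by
  refine ⟨hl, fun p hp z hz hzp => ((hfib z hz).1 ⟨p, hp, hzp⟩).1,
    hl.gapCells_subset_of_dense hF hDI hID fun z hz hzD => ?_, fun z hz hzD =>
    (hl.mem_gapCells_iff (hDI hzD) hzD).2 ?_⟩
  · by_contra hzF
    have hmid (p : Band) (hp : p ∈ l) : ∃ y ∈ p.fiber z.re, |y| < R := by
      obtain ⟨y, hy⟩ := exists_between ((hl.isProper p hp).lower_lt_upper z.re hzD)
      exact ⟨y, hy, ((hfib ⟨z.re, y⟩ hzD).1 ⟨p, hp, hy⟩).2⟩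
    obtain ⟨hout, ⟨p, hp, hpz⟩, q, hq, hqz⟩ := (hl.mem_gapCells_iff (hDI hzD) hzD).1 hz
    obtain ⟨y, hy, hyR⟩ := hmid p hp
    obtain ⟨w, hw, hwR⟩ := hmid q hq
    have hzR : |z.im| < R := abs_lt.2
      ⟨(abs_lt.1 hyR).1.trans (hy.2.trans_le hpz), (hqz.trans_lt hw.1).trans (abs_lt.1 hwR).2⟩
    obtain ⟨s, hs, hsz⟩ := (hfib z hzD).2 ⟨hzF, hzR⟩
    exact hout s hs hsz
  · have hout (p : Band) (hp : p ∈ l) : z.im ∉ p.fiber z.re := fun h =>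
      ((hfib z hzD).1 ⟨p, hp, h⟩).1 hz
    have hfar (y : ℝ) (hry : r < |y|) (hyR : |y| < R) : ∃ p ∈ l, y ∈ p.fiber z.re :=
      (hfib ⟨z.re, y⟩ hzD).2 ⟨fun h => (hFr _ h).not_gt hry, hyR⟩
    obtain ⟨y, hry, hyR⟩ := exists_between hrR
    have hy : |y| = y := abs_of_pos (((abs_nonneg _).trans (hFr z hz)).trans_lt hry)
    obtain ⟨p, hp, hpy⟩ := hfar (-y) (by rwa [abs_neg, hy]) (by rwa [abs_neg, hy])
    obtain ⟨q, hq, hqy⟩ := hfar y (by rwa [hy]) (by rwa [hy])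
    obtain ⟨hz₁, hz₂⟩ := abs_le.1 (hFr z hz)
    exact ⟨hout, ⟨p, hp, not_lt.1 fun h => hout p hp ⟨by linarith [hpy.1], h⟩⟩,
      q, hq, not_lt.1 fun h => hout q hq ⟨h, by linarith [hqy.2]⟩⟩

theorem IsConvexCover.exists_isBandDecomposition {ι : Type*} [Finite ι] {M : ι → Set ℂ} {R : ℝ}
    (hM : IsConvexCover F R M) (hF : IsClosed F) (hD : IsConnected D) (hDI : D ⊆ Icc a b)
    (hID : Icc a b ⊆ closure D) (hDR : ∀ x ∈ D, |x| < R)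
    (hinter : ∀ i j, D ⊆ Complex.re '' (M i ∩ M j) ∨ Disjoint D (Complex.re '' (M i ∩ M j))) :
    ∃ l, IsBandDecomposition F D a b l := by
  obtain ⟨r, hrR, hFr⟩ := hM.exists_lt
  obtain ⟨l, hl, hlM⟩ :=
    exists_isStack_of_convex hM.isOpen hM.convex hM.isBounded hD hDI hID hinter
  refine ⟨l, isBandDecomposition_of_mem_fiber_iff hF hrR (fun z hz => (hFr z hz).2) hDI hID hl
    fun z hz => ?_⟩
  rw [hlM z hz, hM.mem_iff, and_iff_right (hDR _ hz)]

theorem Icc_min'_max'_induction {α : Type*} [LinearOrder α] {p : Set α → Prop} {C : Finset α}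
    (hC : C.Nonempty) (empty : p ∅) (insert_point : ∀ s ∈ C, ∀ U, s ∉ U → p U → p (insert s U))
    (union_Ioo : ∀ s ∈ C, ∀ t ∈ C, s < t → Disjoint (Ioo s t) C → ∀ U, s ∈ U → t ∈ U →
      Disjoint (Ioo s t) U → p U → p (U ∪ Ioo s t)) : p (Icc (C.min' hC) (C.max' hC)) := by
  induction C using Finset.induction_on_max with
  | empty => exact absurd hC Finset.not_nonempty_empty
  | insert t C hlt ih =>
    rcases C.eq_empty_or_nonempty with rfl | hne
    · simpa using insert_point t (by simp) ∅ (notMem_empty t) empty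
    have hmem {s : α} (hs : s ∈ C) : s ∈ insert t C := Finset.mem_insert_of_mem hs
    have hst : C.max' hne < t := hlt _ (C.max'_mem hne)
    have hdisj {r s : α} (hs : s ≤ t) (h : Disjoint (Ioo r s) C) :
        Disjoint (Ioo r s) (insert t C : Finset α) := by
      rw [Finset.coe_insert, ← singleton_union, disjoint_union_right, disjoint_singleton_right]
      exact ⟨fun hts => hts.2.not_ge hs, h⟩
    have hp := ih hne (fun s hs => insert_point s (hmem hs)) fun s hs r hr hsr h =>
      union_Ioo s (hmem hs) r (hmem hr) hsr (hdisj (hlt r hr).le h)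
    have hpt := insert_point t (Finset.mem_insert_self t C) _ (fun h => hst.not_ge h.2) hp
    have hpIoo := union_Ioo _ (hmem (C.max'_mem hne)) t (Finset.mem_insert_self t C) hst
      (hdisj le_rfl (disjoint_left.2 fun x hx hxC => hx.1.not_ge (C.le_max' x hxC))) _
      (Or.inr ⟨C.min'_le _ (C.max'_mem hne), le_rfl⟩) (Or.inl rfl)
      (disjoint_left.2 fun x hx hxU => hxU.elim hx.2.ne fun h => hx.1.not_ge h.2) hpt
    rw [Finset.min'_insert t C hne, min_eq_right (hlt _ (C.min'_mem hne)).le,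
      Finset.max'_insert t C hne, max_eq_left hst.le]
    rwa [insert_union, ← union_insert, Ioo_insert_right hst,
      Icc_union_Ioc_eq_Icc (C.min'_le _ (C.max'_mem hne)) hst.le] at hpIoo

theorem Ioo_subset_or_disjoint_of_ordConnected {α : Type*} [ConditionallyCompleteLinearOrder α]
    {A : Set α} (hA : A.OrdConnected) {s t : α} (hinf : sInf A ∉ Ioo s t)
    (hsup : sSup A ∉ Ioo s t) : Ioo s t ⊆ A ∨ Disjoint (Ioo s t) A := by
  by_contra! hn
  obtain ⟨y, hy, hyA⟩ := not_subset.1 hn.1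
  obtain ⟨x, hx, hxA⟩ := not_disjoint_iff.1 hn.2
  rcases le_total x y with hxy | hyx
  · have hub : ∀ w ∈ A, w ≤ y := fun w hw =>
      not_lt.1 fun h => hyA (hA.out hxA hw ⟨hxy, h.le⟩)
    exact hsup ⟨hx.1.trans_le (le_csSup ⟨y, hub⟩ hxA), (csSup_le ⟨x, hxA⟩ hub).trans_lt hy.2⟩
  · have hlb : ∀ w ∈ A, y ≤ w := fun w hw =>
      not_lt.1 fun h => hyA (hA.out hw hxA ⟨h.le, hyx⟩)
    exact hinf ⟨hy.1.trans_le (le_csInf ⟨x, hxA⟩ hlb), (csInf_le ⟨y, hlb⟩ hxA).trans_lt hx.2⟩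

theorem exists_finset_Ioo_subset_or_disjoint {κ α : Type*} [Finite κ]
    [ConditionallyCompleteLinearOrder α] {A : κ → Set α} (hA : ∀ k, (A k).OrdConnected) {a b : α}
    (hab : a ≤ b) : ∃ C : Finset α, a ∈ C ∧ b ∈ C ∧ ↑C ⊆ Icc a b ∧
      ∀ s ∈ C, ∀ t ∈ C, Disjoint (Ioo s t) C → ∀ k, Ioo s t ⊆ A k ∨ Disjoint (Ioo s t) (A k) := by
  let S : Set α := ({a, b} ∪ range (fun k => sInf (A k)) ∪ range fun k => sSup (A k)) ∩ Icc a b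
  have hS : S.Finite :=
    (((toFinite {a, b}).union (finite_range _)).union (finite_range _)).subset inter_subset_left
  refine ⟨hS.toFinset, ?_⟩
  simp only [Finite.mem_toFinset, Finite.coe_toFinset]
  refine ⟨⟨Or.inl (Or.inl (Or.inl rfl)), left_mem_Icc.2 hab⟩,
    ⟨Or.inl (Or.inl (Or.inr rfl)), right_mem_Icc.2 hab⟩, inter_subset_right,
    fun s hs t ht hst k => ?_⟩
  have hsub : Ioo s t ⊆ Icc a b := fun x hx => ⟨hs.2.1.trans hx.1.le, hx.2.le.trans ht.2.2⟩
  exact Ioo_subset_or_disjoint_of_ordConnected (hA k)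
    (fun h => disjoint_left.1 hst h ⟨Or.inl (Or.inr ⟨k, rfl⟩), hsub h⟩)
    (fun h => disjoint_left.1 hst h ⟨Or.inr ⟨k, rfl⟩, hsub h⟩)

theorem IsConvexCover.hasTietzePartition_inter_insert {ι : Type*} [Finite ι] {M : ι → Set ℂ}
    {R : ℝ} (hM : IsConvexCover F R M) (hF : IsClosed F) {U : Set ℝ} {s : ℝ} (hs : s ∉ U)
    (hU : HasTietzePartition (F ∩ Complex.re ⁻¹' U)) :
    HasTietzePartition (F ∩ Complex.re ⁻¹' insert s U) := by
  rw [← union_singleton, preimage_union, inter_union_distrib_left]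
  by_cases hsR : |s| < R
  · obtain ⟨l, hl⟩ := hM.exists_isBandDecomposition (D := {s}) (a := s) (b := s) hF
      isConnected_singleton (by simp) (by simp) (by simpa using hsR) fun i j => by
        simpa only [singleton_subset_iff, disjoint_singleton_left] using em _
    have hgap : F ∩ Complex.re ⁻¹' {s} = gapCells s s l := Subset.antisymm
      (fun z hz => hl.subset_gapCells z hz.1 hz.2) fun z hz =>
        ⟨hl.gapCells_subset hz, by simpa using re_mem_Icc_of_mem_gapCells hz⟩
    rw [hgap]
    exact hasTietzePartition_union_gapCells_self hU (fun z hz hzs => hs (hzs ▸ hz.2)) hl.isStack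
  · obtain ⟨r, hrR, hr⟩ := hM.exists_lt
    have hempty : F ∩ Complex.re ⁻¹' {s} = ∅ := eq_empty_of_forall_notMem fun z hz =>
      hsR ((congrArg abs hz.2.symm).trans_lt ((hr z hz.1).1.trans_lt hrR))
    rwa [hempty, union_empty]

theorem IsConvexCover.hasTietzePartition_inter_union_Ioo {ι : Type*} [Finite ι] {M : ι → Set ℂ}
    {R : ℝ} (hM : IsConvexCover F R M) (hF : IsCompact F) (hFc : IsPreconnected Fᶜ) {U : Set ℝ}
    (hab : a < b) (ha : a ∈ U) (hb : b ∈ U) (habU : Disjoint (Ioo a b) U)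
    (habR : ∀ x ∈ Ioo a b, |x| < R)
    (hinter : ∀ i j, Ioo a b ⊆ Complex.re '' (M i ∩ M j) ∨
      Disjoint (Ioo a b) (Complex.re '' (M i ∩ M j)))
    (hU : HasTietzePartition (F ∩ Complex.re ⁻¹' U)) :
    HasTietzePartition (F ∩ Complex.re ⁻¹' (U ∪ Ioo a b)) := by
  obtain ⟨l, hl⟩ := hM.exists_isBandDecomposition hF.isClosed (isConnected_Ioo hab)
    Ioo_subset_Icc_self (closure_Ioo hab.ne).ge habR hinter
  convert hasTietzePartition_union_gapCells_Ioo hF hFc hU inter_subset_left hab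
    (fun z hz hza => ⟨hz, mem_preimage.2 (hza ▸ ha)⟩)
    (fun z hz hzb => ⟨hz, mem_preimage.2 (hzb ▸ hb)⟩)
    (fun z hz hzab => disjoint_left.1 habU hzab hz.2) hl.isStack hl.notMem
    hl.gapCells_subset using 1
  have hIcc : Icc a b ⊆ U ∪ Ioo a b := by
    rw [← Ioo_union_both hab.le]
    exact union_subset subset_union_right (pair_subset (Or.inl ha) (Or.inl hb))
  rw [preimage_union, inter_union_distrib_left]
  refine Subset.antisymm
    (union_subset_union_right _ fun z hz => hl.subset_gapCells z hz.1 hz.2)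
    (union_subset subset_union_left fun z hz => ?_)
  rw [← inter_union_distrib_left, ← preimage_union]
  exact ⟨hl.gapCells_subset hz, hIcc (re_mem_Icc_of_mem_gapCells hz)⟩

theorem exists_isConvexCover {ι : Type*} {N : ι → Set ℂ} (hF : Bornology.IsBounded F)
    (hNo : ∀ i, IsOpen (N i)) (hNc : ∀ i, Convex ℝ (N i)) (hN : Fᶜ = ⋃ i, N i) :
    ∃ R, ∃ M : ι → Set ℂ, IsConvexCover F R M := by
  obtain ⟨r, hr⟩ := hF.exists_norm_le
  refine ⟨r + 1, fun i => N i ∩ (Ioo (-(r + 1)) (r + 1) ×ℂ Ioo (-(r + 1)) (r + 1)),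
    fun i => (hNo i).inter (isOpen_Ioo.reProdIm isOpen_Ioo), fun i => (hNc i).inter
      (((convex_Ioo _ _).linear_preimage Complex.reLm).inter
        ((convex_Ioo _ _).linear_preimage Complex.imLm)), fun z => ?_, r, lt_add_one r, fun z hz =>
      ⟨(Complex.abs_re_le_norm z).trans (hr z hz), (Complex.abs_im_le_norm z).trans (hr z hz)⟩⟩
  rw [← mem_compl_iff, hN, mem_iUnion, abs_lt, abs_lt]
  simp only [mem_inter_iff, Complex.mem_reProdIm, mem_Ioo, exists_and_right]

theorem hasTietzePartition_of_isPreconnected_compl {ι : Type*} [Finite ι] {N : ι → Set ℂ}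
    (hF : IsCompact F) (hFc : IsPreconnected Fᶜ) (hNo : ∀ i, IsOpen (N i))
    (hNc : ∀ i, Convex ℝ (N i)) (hN : Fᶜ = ⋃ i, N i) : HasTietzePartition F := by
  rcases F.eq_empty_or_nonempty with rfl | ⟨z, hz⟩
  · exact .empty
  obtain ⟨R, M, hM⟩ := exists_isConvexCover hF.isBounded hNo hNc hN
  obtain ⟨r, hrR, hr⟩ := hM.exists_lt
  have hR : 0 < R := ((abs_nonneg _).trans (hr z hz).1).trans_lt hrR
  obtain ⟨C, hRC, hCR, hC, hCinter⟩ := exists_finset_Ioo_subset_or_disjoint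
    (A := fun k : ι × ι => Complex.re '' (M k.1 ∩ M k.2))
    (fun k => (((hM.convex k.1).inter (hM.convex k.2)).linear_image Complex.reLm).ordConnected)
    (neg_le_self hR.le)
  have hF_Icc : F ∩ Complex.re ⁻¹' Icc (C.min' ⟨R, hCR⟩) (C.max' ⟨R, hCR⟩) = F :=
    inter_eq_left.2 fun w hw => ⟨(C.min'_le _ hRC).trans (abs_le.1 ((hr w hw).1.trans hrR.le)).1,
      (abs_le.1 ((hr w hw).1.trans hrR.le)).2.trans (C.le_max' _ hCR)⟩
  rw [← hF_Icc]
  refine Icc_min'_max'_induction (p := fun U => HasTietzePartition (F ∩ Complex.re ⁻¹' U)) ⟨R, hCR⟩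
    (by simpa using HasTietzePartition.empty)
    (fun s _ U hs hU => hM.hasTietzePartition_inter_insert hF.isClosed hs hU)
    fun s hs t ht hst hstC U hsU htU hstU hU =>
      hM.hasTietzePartition_inter_union_Ioo hF hFc hst hsU htU hstU (fun x hx => abs_lt.2
        ⟨(hC hs).1.trans_lt hx.1, hx.2.trans_le (hC ht).2⟩)
        (fun i j => hCinter s hs t ht hstC (i, j)) hU

end Sweep

section FilledHull

variable {X : Type*} [TopologicalSpace X] [Bornology X] {B : Set X} {p : X}

/-- The filled hull of `B`: the union of `B` with the bounded connected components of its
complement. The region of a simple polygon is by definition the filled hull of its boundary. -/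
def filledHull (B : Set X) : Set X :=
  B ∪ {x | x ∉ B ∧ Bornology.IsBounded (connectedComponentIn Bᶜ x)}

theorem compl_filledHull [(Bornology.cobounded X).NeBot]
    (hp : connectedComponentIn Bᶜ p ∈ Bornology.cobounded X) :
    (filledHull B)ᶜ = connectedComponentIn Bᶜ p := by
  ext x
  suffices x ∉ B → (¬ Bornology.IsBounded (connectedComponentIn Bᶜ x) ↔
      x ∈ connectedComponentIn Bᶜ p) by
    simp only [filledHull, mem_compl_iff, mem_union, mem_ofPred_eq]
    by_cases hx : x ∈ B
    · simpa only [hx, true_or, not_true_eq_false, false_iff] using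
        fun h => absurd hx (connectedComponentIn_subset Bᶜ p h)
    · simpa only [hx, not_false_eq_true, true_and, false_or] using this hx
  refine fun hxB => ⟨fun hx => ?_, fun hx hbdd => ?_⟩
  · obtain ⟨y, hyx, hyp⟩ : (connectedComponentIn Bᶜ x ∩ connectedComponentIn Bᶜ p).Nonempty := by
      by_contra h
      exact hx ((Bornology.isCobounded_def.2 hp).compl.subset
        (disjoint_iff_inter_eq_empty.2 (not_nonempty_iff_eq_empty.1 h)).subset_compl_right)
    rw [connectedComponentIn_eq hyp, ← connectedComponentIn_eq hyx]
    exact mem_connectedComponentIn hxB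
  · rw [← connectedComponentIn_eq hx, Bornology.isBounded_def] at hbdd
    exact Filter.empty_notMem (Bornology.cobounded X)
      (by simpa only [compl_inter_self] using Filter.inter_mem hbdd hp)

end FilledHull

section NormedSpace

variable {E : Type*} [NormedAddCommGroup E] [NormedSpace ℝ E]

theorem isPreconnected_compl_closedBall (hE : 1 < Module.rank ℝ E) (r : ℝ) :
    IsPreconnected (closedBall (0 : E) r)ᶜ := by
  rcases lt_or_ge r 0 with hr | hr
  · rw [closedBall_eq_empty.2 hr, compl_empty]
    exact isPreconnected_univ
  have hpolar : (closedBall (0 : E) r)ᶜ =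
      (fun p : E × ℝ => p.2 • p.1) '' (sphere 0 1 ×ˢ Ioi r) := by
    ext x
    simp only [mem_compl_iff, mem_closedBall_zero_iff, not_le, mem_image, mem_prod,
      mem_sphere_zero_iff_norm, mem_Ioi, Prod.exists]
    constructor
    · intro hx
      have hx₀ : ‖x‖ ≠ 0 := (hr.trans_lt hx).ne'
      exact ⟨‖x‖⁻¹ • x, ‖x‖, ⟨by simp [norm_smul, hx₀], hx⟩, by simp [smul_smul, hx₀]⟩
    · rintro ⟨u, s, ⟨hu, hs⟩, rfl⟩
      rwa [norm_smul, hu, mul_one, Real.norm_of_nonneg (hr.trans hs.le)]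
  rw [hpolar]
  exact ((isPreconnected_sphere hE 0 1).prod isPreconnected_Ioi).image _ (by fun_prop)

theorem isPreconnected_thickening {s : Set E} (hs : IsPreconnected s) (δ : ℝ) :
    IsPreconnected (thickening δ s) := by
  rw [← add_ball_zero, ← Set.add_image_prod]
  exact (hs.prod (isPreconnected_ball (x := (0 : E)) (r := δ))).image _ continuous_add.continuousOn

theorem exists_connectedComponentIn_compl_mem_cobounded (hE : 1 < Module.rank ℝ E) {B : Set E}
    (hB : Bornology.IsBounded B) :
    ∃ p, connectedComponentIn Bᶜ p ∈ Bornology.cobounded E := by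
  have : Nontrivial E := rank_pos_iff_nontrivial.1 (zero_lt_one.trans hE)
  obtain ⟨r, hr⟩ := hB.subset_closedBall 0
  obtain ⟨p, hp⟩ := NormedSpace.exists_lt_norm ℝ E r
  refine ⟨p, Filter.mem_of_superset
    ((hasBasis_cobounded_compl_closedBall (0 : E)).mem_of_mem (i := r) trivial) ?_⟩
  exact (isPreconnected_compl_closedBall hE r).subset_connectedComponentIn
    (by simpa using hp) (compl_subset_compl.2 hr)

theorem exists_compl_filledHull_eq_connectedComponentIn (hE : 1 < Module.rank ℝ E) {B : Set E}
    (hB : Bornology.IsBounded B) :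
    ∃ p, (filledHull B)ᶜ = connectedComponentIn Bᶜ p := by
  have : Nontrivial E := rank_pos_iff_nontrivial.1 (zero_lt_one.trans hE)
  obtain ⟨p, hp⟩ := exists_connectedComponentIn_compl_mem_cobounded hE hB
  exact ⟨p, compl_filledHull hp⟩

theorem isBounded_filledHull (hE : 1 < Module.rank ℝ E) {B : Set E}
    (hB : Bornology.IsBounded B) : Bornology.IsBounded (filledHull B) := by
  have : Nontrivial E := rank_pos_iff_nontrivial.1 (zero_lt_one.trans hE)
  obtain ⟨p, hp⟩ := exists_connectedComponentIn_compl_mem_cobounded hE hB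
  rwa [Bornology.isBounded_def, compl_filledHull hp]

end NormedSpace

section Erosion

variable {X : Type*} [PseudoMetricSpace X] {S : Set X} {δ : ℝ}

/-- The erosion of `S` by the radius `δ`: the centers of the open balls of radius `δ` contained
in `S`. The free space of a polygon is the erosion of its region by the radius `1`. -/
def erosion (δ : ℝ) (S : Set X) : Set X :=
  {x | ball x δ ⊆ S}

theorem compl_erosion : (erosion δ S)ᶜ = thickening δ Sᶜ := by
  ext x
  simp only [erosion, mem_compl_iff, mem_ofPred_eq, not_subset, mem_thickening_iff, mem_ball',
    and_comm]

theorem isClosed_erosion : IsClosed (erosion δ S) := by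
  rw [← isOpen_compl_iff, compl_erosion]
  exact isOpen_thickening

theorem erosion_subset (hδ : 0 < δ) : erosion δ S ⊆ S :=
  fun _ hx => hx (mem_ball_self hδ)

end Erosion

section Arrangement

universe u

variable {E : Type*} {ι : Type u} [NormedAddCommGroup E] [NormedSpace ℝ E] [FiniteDimensional ℝ E]

-- The two sides of a hyperplane that contains `H`.
theorem exists_isOpen_convex_disjoint_affineSubspace {H : AffineSubspace ℝ E} (hH : H ≠ ⊤) :
    ∃ U : Bool → Set E, (∀ b, IsOpen (U b)) ∧ (∀ b, Convex ℝ (U b)) ∧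
      (∀ b, Disjoint (U b) H) ∧ Dense (⋃ b, U b) := by
  rcases H.eq_bot_or_nonempty with rfl | ⟨x₀, hx₀⟩
  · exact ⟨fun _ => univ, fun _ => isOpen_univ, fun _ => convex_univ,
      fun _ => disjoint_bot_right, by rw [iUnion_const]; exact dense_univ⟩
  have hdir : H.direction < ⊤ := lt_top_iff_ne_top.2 fun h =>
    hH ((AffineSubspace.direction_eq_top_iff_of_nonempty ⟨x₀, hx₀⟩).1 h)
  obtain ⟨f, hf, hHf⟩ := Submodule.exists_le_ker_of_lt_top _ hdir
  have hfH : ∀ x ∈ H, f x = f x₀ := fun x hx =>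
    sub_eq_zero.1 (map_sub f x x₀ ▸ hHf (AffineSubspace.vsub_mem_direction hx hx₀))
  have hfc : Continuous f := f.continuous_of_finiteDimensional
  refine ⟨fun b => f ⁻¹' bif b then Ioi (f x₀) else Iio (f x₀), ?_, ?_, ?_, ?_⟩
  · rintro (_ | _)
    exacts [isOpen_Iio.preimage hfc, isOpen_Ioi.preimage hfc]
  · rintro (_ | _)
    exacts [(convex_Iio _).linear_preimage f, (convex_Ioi _).linear_preimage f]
  · rintro (_ | _) <;> exact disjoint_left.2 fun x hxU hxH => by simp [hfH x hxH] at hxU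
  · have hunion : ⋃ b, f ⁻¹' (bif b then Ioi (f x₀) else Iio (f x₀)) = f ⁻¹' {f x₀}ᶜ := by
      rw [← preimage_iUnion, ← union_eq_iUnion, union_comm, Iio_union_Ioi]
    rw [hunion]
    exact (dense_compl_singleton (f x₀)).preimage
      (f.isOpenMap_of_finiteDimensional (f.surjective hf))

theorem exists_dense_iUnion_convex_compl [Finite ι] {H : ι → AffineSubspace ℝ E}
    (hH : ∀ i, H i ≠ ⊤) :
    ∃ cell : (ι → Bool) → Set E, (∀ σ, IsOpen (cell σ)) ∧ (∀ σ, Convex ℝ (cell σ)) ∧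
      (∀ σ, cell σ ⊆ (⋃ i, (H i : Set E))ᶜ) ∧ Dense (⋃ σ, cell σ) := by
  choose U hUo hUc hUH hU using fun i => exists_isOpen_convex_disjoint_affineSubspace (hH i)
  refine ⟨fun σ => ⋂ i, U i (σ i), fun σ => isOpen_iInter_of_finite fun i => hUo i (σ i),
    fun σ => convex_iInter fun i => hUc i (σ i), fun σ => ?_, ?_⟩
  · rw [compl_iUnion]
    exact iInter_mono fun i => (hUH i (σ i)).subset_compl_right
  · have hdistrib : ⋃ σ : ι → Bool, ⋂ i, U i (σ i) = ⋂ i, ⋃ b, U i b := iInf_iSup_eq.symm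
    rw [hdistrib]
    exact dense_iInter_of_isOpen (fun i => isOpen_iUnion (hUo i)) hU

theorem exists_convex_cover_thickening_connectedComponentIn [Finite ι]
    {H : ι → AffineSubspace ℝ E} (hH : ∀ i, H i ≠ ⊤) {B : Set E} (hB : IsClosed B)
    (hBH : B ⊆ ⋃ i, (H i : Set E)) (p : E) (δ : ℝ) :
    ∃ (κ : Type u) (_ : Finite κ) (N : κ → Set E), (∀ k, IsOpen (N k)) ∧
      (∀ k, Convex ℝ (N k)) ∧ thickening δ (connectedComponentIn Bᶜ p) = ⋃ k, N k := by
  obtain ⟨cell, -, hcc, hcH, hcell⟩ := exists_dense_iUnion_convex_compl hH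
  set K := connectedComponentIn Bᶜ p
  refine ⟨{σ // cell σ ⊆ K}, inferInstance, fun σ => thickening δ (cell σ),
    fun σ => isOpen_thickening, fun σ => (hcc σ).thickening δ, ?_⟩
  have hdense : K ⊆ closure (⋃ σ : {σ // cell σ ⊆ K}, cell σ) := by
    refine (hcell.open_subset_closure_inter hB.isOpen_compl.connectedComponentIn).trans
      (closure_mono ?_)
    rintro x ⟨hxK, hx⟩
    obtain ⟨σ, hxσ⟩ := mem_iUnion.1 hx
    have hσ : cell σ ⊆ connectedComponentIn Bᶜ x :=
      (hcc σ).isPreconnected.subset_connectedComponentIn hxσ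
        ((hcH σ).trans (compl_subset_compl.2 hBH))
    exact mem_iUnion.2 ⟨⟨σ, hσ.trans (connectedComponentIn_eq hxK).ge⟩, hxσ⟩
  rw [← thickening_iUnion]
  refine Subset.antisymm ?_ (thickening_subset_of_subset _ (iUnion_subset fun σ => σ.2))
  rw [← thickening_closure (s := ⋃ _, _)]
  exact thickening_subset_of_subset _ hdense

end Arrangement

section Plane

variable {E : Type*} [NormedAddCommGroup E] [NormedSpace ℝ E]

theorem contractibleSpace_connectedComponentIn_of_isPreconnected_compl {ι : Type*} [Finite ι]
    (hE : Module.finrank ℝ E = 2) {F : Set E} {N : ι → Set E} (hF : IsCompact F)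
    (hFc : IsPreconnected Fᶜ) (hNo : ∀ i, IsOpen (N i)) (hNc : ∀ i, Convex ℝ (N i))
    (hN : Fᶜ = ⋃ i, N i) {x : E} (hx : x ∈ F) :
    ContractibleSpace (connectedComponentIn F x) := by
  have : FiniteDimensional ℝ E := Module.finite_of_finrank_eq_succ hE
  let e : ℂ ≃L[ℝ] E := .ofFinrankEq (by rw [Complex.finrank_real_complex, hE])
  have hpartition : HasTietzePartition (e ⁻¹' F) :=
    hasTietzePartition_of_isPreconnected_compl (N := fun i => e ⁻¹' N i)
      (e.toHomeomorph.isCompact_preimage.2 hF) (e.toHomeomorph.isPreconnected_preimage.2 hFc)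
      (fun i => (hNo i).preimage e.continuous)
      (fun i => (hNc i).linear_preimage e.toLinearEquiv.toLinearMap)
      (by rw [← preimage_compl, hN, preimage_iUnion])
  have hz : e.symm x ∈ e ⁻¹' F := by rwa [mem_preimage, e.apply_symm_apply]
  have himage : e.toHomeomorph '' connectedComponentIn (e ⁻¹' F) (e.symm x) =
      connectedComponentIn F x := by
    rw [e.toHomeomorph.image_connectedComponentIn hz]
    exact congrArg₂ connectedComponentIn (image_preimage_eq _ e.surjective) (e.apply_symm_apply x)
  have := hpartition.contractibleSpace_connectedComponentIn hz
  rw [← himage]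
  exact (e.toHomeomorph.image _).symm.contractibleSpace

end Plane

theorem affineSpan_pair_ne_top {k V Q : Type*} [DivisionRing k] [AddCommGroup V] [Module k V]
    [AddTorsor V Q] (hV : 1 < Module.finrank k V) (a b : Q) : line[k, a, b] ≠ ⊤ := by
  intro h
  have hfinrank : Module.finrank k (vectorSpan k {a, b}) ≤ 1 :=
    collinear_iff_finrank_le_one.1 (collinear_pair k a b)
  rw [← direction_affineSpan, h, AffineSubspace.direction_top, finrank_top] at hfinrank
  exact hfinrank.not_gt hV

theorem exists_mem_Icc_castSucc_succ {α : Type*} [LinearOrder α] {s : α} :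
    ∀ {n : ℕ} {t : Fin (n + 2) → α}, s ∈ Icc (t 0) (t (Fin.last _)) →
      ∃ i : Fin (n + 1), s ∈ Icc (t i.castSucc) (t i.succ)
  | 0, _, hs => ⟨0, hs⟩
  | n + 1, t, hs => by
    rcases le_total s (t (Fin.last (n + 1)).castSucc) with h | h
    · obtain ⟨i, hi⟩ := exists_mem_Icc_castSucc_succ (t := t ∘ Fin.castSucc) ⟨hs.1, h⟩
      exact ⟨i.castSucc, hi⟩
    · exact ⟨Fin.last _, h, hs.2⟩

namespace SimplePolygon

variable (P : SimplePolygon)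

theorem isCompact_bdryCurve : IsCompact P.bdryCurve :=
  isCompact_Icc.image P.continuous

theorem bdryCurve_subset_iUnion_affineSubspace :
    ∃ (n : ℕ) (H : Fin n → AffineSubspace ℝ Plane), (∀ i, H i ≠ ⊤) ∧
      P.bdryCurve ⊆ ⋃ i, (H i : Set Plane) := by
  obtain ⟨_ | n, t, ht₀, ht₁, -, hP⟩ := P.polygonal
  · exact absurd (ht₀.symm.trans ht₁) zero_ne_one
  refine ⟨n + 1, fun i => line[ℝ, P.toFun (t i.castSucc), P.toFun (t i.succ)],
    fun i => affineSpan_pair_ne_top (by simp) _ _, ?_⟩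
  rintro _ ⟨s, hs, rfl⟩
  obtain ⟨i, hi⟩ := exists_mem_Icc_castSucc_succ (t := t) (by rwa [ht₀, ht₁])
  refine mem_iUnion.2 ⟨i, ?_⟩
  rw [hP i s hi, add_comm (P.toFun _)]
  exact AffineMap.lineMap_mem_affineSpan_pair _ _ _

end SimplePolygon

theorem freeSpace_components_simplyConnected_general {E ι : Type*} [NormedAddCommGroup E]
    [NormedSpace ℝ E] [Finite ι] (hE : Module.finrank ℝ E = 2) {H : ι → AffineSubspace ℝ E}
    (hH : ∀ i, H i ≠ ⊤) {B : Set E} (hB : IsCompact B) (hBH : B ⊆ ⋃ i, (H i : Set E)) {δ : ℝ}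
    (hδ : 0 < δ) {x : E} (hx : x ∈ erosion δ (filledHull B)) :
    ContractibleSpace (connectedComponentIn (erosion δ (filledHull B)) x) := by
  have : FiniteDimensional ℝ E := Module.finite_of_finrank_eq_succ hE
  have hrank : 1 < Module.rank ℝ E := by
    exact_mod_cast Module.lt_rank_of_lt_finrank (n := 1) (by rw [hE]; norm_num)
  obtain ⟨p, hp⟩ := exists_compl_filledHull_eq_connectedComponentIn hrank hB.isBounded
  have hcompl : (erosion δ (filledHull B))ᶜ = thickening δ (connectedComponentIn Bᶜ p) := by
    rw [compl_erosion, hp]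
  obtain ⟨κ, _, N, hNo, hNc, hN⟩ :=
    exists_convex_cover_thickening_connectedComponentIn hH hB.isClosed hBH p δ
  have hcompact : IsCompact (erosion δ (filledHull B)) :=
    isCompact_of_isClosed_isBounded isClosed_erosion
      ((isBounded_filledHull hrank hB.isBounded).subset (erosion_subset hδ))
  have hconn : IsPreconnected (erosion δ (filledHull B))ᶜ :=
    hcompl ▸ isPreconnected_thickening isPreconnected_connectedComponentIn δ
  exact contractibleSpace_connectedComponentIn_of_isPreconnected_compl hE hcompact hconn hNo hNc
    (hcompl.trans hN) hx

/-- Every connected component of the free space of a simple polygon is simply connected. -/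
theorem freeSpace_components_simplyConnected (P : SimplePolygon) (C : Set Plane)
    (hC : ∃ x ∈ P.freeSpace, C = connectedComponentIn P.freeSpace x) :
    SimplyConnectedSpace C := by
  obtain ⟨x, hx, rfl⟩ := hC
  obtain ⟨n, H, hH, hPH⟩ := P.bdryCurve_subset_iUnion_affineSubspace
  have : ContractibleSpace (connectedComponentIn P.freeSpace x) :=
    freeSpace_components_simplyConnected_general (finrank_euclideanSpace_fin (n := 2)) hH
      P.isCompact_bdryCurve hPH one_pos hx
  infer_instance
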